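/- arXiv:math/0302021 — 2 statements merged into one kernel-verified Lean document; each statement's English description precedes it below -/
import Mathlib

section
/- Let d₁,…,d_l be integers and let α ∈ Φ^l be a nonzero homogeneous (2d₁,…,2d_l)-regular function. Then deg α ≥ −(d₁+⋯+d_l). Moreover, if deg α = −(d₁+⋯+d_l), then Δα = 0 and α* = α, where α*(z₁,…,z_l) = (−1)^{d₁+⋯+d_l}·z₁^{−2d₁}⋯z_l^{−2d_l}·α(z₁⁻¹,…,z_l⁻¹). -/
open scoped Classical

noncomputable section

namespace Griess

open MvPolynomial

variable {k : Type} [Field k]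

/-- The field `k(z₁,…,z_l)` of rational functions over `k` in `l` variables. -/
abbrev RF (k : Type) [Field k] (l : ℕ) : Type := FractionRing (MvPolynomial (Fin l) k)

/-- The variable `zᵢ` as an element of the rational function field. -/
def zv {k : Type} [Field k] {l : ℕ} (i : Fin l) : RF k l :=
  algebraMap (MvPolynomial (Fin l) k) (RF k l) (MvPolynomial.X i)

/-- The space `Φ^l` of rational functions of the form
`p(z₁,…,z_l) · ∏_{i<j} (zᵢ - z_j)^{k_{ij}}`. -/
def Phi (k : Type) [Field k] (l : ℕ) : Set (RF k l) :=
  { x | ∃ (p : MvPolynomial (Fin l) k) (e : Fin l → Fin l → ℤ),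
      x = algebraMap (MvPolynomial (Fin l) k) (RF k l) p *
        ∏ i : Fin l, ∏ j : Fin l, (if i < j then (zv i - zv j) ^ e i j else 1) }

/-- `D` is the family of partial derivative operators `∂_{z₁},…,∂_{z_l}`:
a family of `k`-linear derivations with `D i (z j) = δ_{ij}`. -/
def IsPartialDeriv {l : ℕ} (D : Fin l → Derivation k (RF k l) (RF k l)) : Prop :=
  ∀ i j : Fin l, D i (zv j) = if j = i then 1 else 0

/-- The operator `Δ = Σᵢ ∂_{zᵢ}`. -/
def Delta {l : ℕ} (D : Fin l → Derivation k (RF k l) (RF k l)) (α : RF k l) : RF k l :=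
  ∑ i, D i α

/-- The operator `Δ*(n₁,…,n_l) = Σᵢ (zᵢ² ∂_{zᵢ} + nᵢ zᵢ)`. -/
def DeltaStar {l : ℕ} (D : Fin l → Derivation k (RF k l) (RF k l)) (n : Fin l → ℤ)
    (α : RF k l) : RF k l :=
  ∑ i, ((zv i) ^ 2 * D i α + (n i : RF k l) * zv i * α)

section Subst

variable {l : ℕ}

/-- The embedding of polynomials in `z₁,…,z_l` into rational functions of
`z₁,…,z_l` and one extra variable `t` (`= RatFunc.X`). -/
def toRatFuncHom (k : Type) [Field k] (l : ℕ) :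
    Polynomial (MvPolynomial (Fin l) k) →+* RatFunc (RF k l) :=
  (algebraMap (Polynomial (RF k l)) (RatFunc (RF k l))).comp
    (Polynomial.mapRingHom (algebraMap (MvPolynomial (Fin l) k) (RF k l)))

lemma toRatFuncHom_injective : Function.Injective (toRatFuncHom k l) := by
  have h1 : Function.Injective (algebraMap (Polynomial (RF k l)) (RatFunc (RF k l))) :=
    IsFractionRing.injective _ _
  have h2 : Function.Injective
      (Polynomial.mapRingHom (algebraMap (MvPolynomial (Fin l) k) (RF k l))) :=
    Polynomial.map_injective _ (IsFractionRing.injective _ _)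
  exact fun a b hab => h2 (h1 hab)

/-- Polynomial level substitution `z_j ↦ t·z_j` for `j ∈ J`. -/
def scaleAux (k : Type) [Field k] (l : ℕ) (J : Finset (Fin l)) :
    MvPolynomial (Fin l) k →+* Polynomial (MvPolynomial (Fin l) k) :=
  (MvPolynomial.aeval (R := k) fun i =>
    if i ∈ J then Polynomial.X * Polynomial.C (MvPolynomial.X i)
    else Polynomial.C (MvPolynomial.X i)).toRingHom

lemma scaleAux_injective (J : Finset (Fin l)) :
    Function.Injective (scaleAux k l J) := by
  have h : (Polynomial.evalRingHom (1 : MvPolynomial (Fin l) k)).comp (scaleAux k l J)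
      = RingHom.id _ := by
    apply MvPolynomial.ringHom_ext
    · intro r; simp [scaleAux]
    · intro i; by_cases hi : i ∈ J <;> simp [scaleAux, hi]
  intro p q hpq
  have hp := DFunLike.congr_fun h p
  have hq := DFunLike.congr_fun h q
  simp only [RingHom.comp_apply, RingHom.id_apply] at hp hq
  rw [← hp, ← hq, hpq]

/-- The substitution `z_j ↦ t·z_j` (for `j ∈ J`), as a map from rational functions
in `z₁,…,z_l` to rational functions in `z₁,…,z_l` and `t`.  Reading off the
coefficients of the Laurent expansion in `t` at `t = 0` of `scaleJ J α` yields the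
decomposition of `α` into its homogeneous components with respect to the total degree
in the variables `{z_j : j ∈ J}`, i.e. the expansion of `α` in the domain where the
variables of `J` are much smaller than the remaining variables. -/
def scaleJ (J : Finset (Fin l)) : RF k l →+* RatFunc (RF k l) :=
  IsFractionRing.lift (g := (toRatFuncHom k l).comp (scaleAux k l J))
    (fun a b hab => scaleAux_injective J (toRatFuncHom_injective hab))

/-- Polynomial level substitution `z_i ↦ z_j + t`. -/
def subPairAux (k : Type) [Field k] (l : ℕ) (i j : Fin l) :
    MvPolynomial (Fin l) k →+* Polynomial (MvPolynomial (Fin l) k) :=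
  (MvPolynomial.aeval (R := k) fun s =>
    if s = i then Polynomial.X + Polynomial.C (MvPolynomial.X j)
    else Polynomial.C (MvPolynomial.X s)).toRingHom

lemma subPairAux_injective (i j : Fin l) :
    Function.Injective (subPairAux k l i j) := by
  have h : (Polynomial.evalRingHom (MvPolynomial.X i - MvPolynomial.X j)).comp
      (subPairAux k l i j) = RingHom.id _ := by
    apply MvPolynomial.ringHom_ext
    · intro r; simp [subPairAux]
    · intro s; by_cases hs : s = i <;> simp [subPairAux, hs]
  intro p q hpq
  have hp := DFunLike.congr_fun h p
  have hq := DFunLike.congr_fun h q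
  simp only [RingHom.comp_apply, RingHom.id_apply] at hp hq
  rw [← hp, ← hq, hpq]

/-- The substitution `z_i ↦ z_j + t`, as a map from rational functions in `z₁,…,z_l`
to rational functions in the variables `z₁,…,z_l` and `t`.  Reading off the Laurent
coefficients in `t` at `t = 0` yields the expansion of a rational function in powers
of `z_i - z_j`, with coefficients not involving `z_i`. -/
def subPair (i j : Fin l) : RF k l →+* RatFunc (RF k l) :=
  IsFractionRing.lift (g := (toRatFuncHom k l).comp (subPairAux k l i j))
    (fun a b hab => subPairAux_injective i j (toRatFuncHom_injective hab))

end Subst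

/-- The coefficient of `tᵐ` in the Laurent expansion at `t = 0` of a rational
function of `t`. -/
def lcoeff {L : Type} [Field L] (m : ℤ) (f : RatFunc L) : L :=
  (f : LaurentSeries L).coeff m

/-- The component `(α)_n` of `α` of degree `n` with respect to the partition
`{1,…,l} = Jᶜ ⊔ J` and the weights `d`:  the part of the expansion of `α` in the
domain where the variables of `J` are much smaller than those of `Jᶜ` whose total
degree in the variables `{z_j : j ∈ J}` equals `n - Σ_{j∈J} d_j`. -/
def component {l : ℕ} (J : Finset (Fin l)) (d : Fin l → ℤ) (n : ℤ) (α : RF k l) :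
    RF k l :=
  lcoeff (n - ∑ j ∈ J, d j) (scaleJ J α)

/-- `α` is homogeneous of total degree `d` in the variables `{z_i : i ∈ S}`:
substituting `z_i ↦ t·z_i` for `i ∈ S` multiplies `α` by `t^d`. -/
def IsHomogeneousOn {l : ℕ} (S : Finset (Fin l)) (d : ℤ) (α : RF k l) : Prop :=
  scaleJ S α = RatFunc.X ^ d * RatFunc.C α

/-- `ρ^{(m)}_{ij} α`: the coefficient of `(z_i - z_j)^m` in the expansion of `α`
in powers of `z_i - z_j` (the coefficients do not involve `z_i`). -/
def rho {l : ℕ} (i j : Fin l) (m : ℤ) (α : RF k l) : RF k l :=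
  lcoeff m (subPair i j α)

/-- `α` is a rational function of the variables `{z_i : i ∈ S}` only. -/
def dependsOnlyOn {l : ℕ} (S : Finset (Fin l)) (α : RF k l) : Prop :=
  α ∈ Subfield.closure (Set.range (algebraMap k (RF k l)) ∪ {x | ∃ i ∈ S, x = zv i})

/-- `α` is an admissible function of the variables `{z_i : i ∈ S}` (the space
`R^{|S|}`):  `α ∈ Φ` is a rational function of the variables of `S` only, it is
`(4,…,4)`-regular and homogeneous of degree `-2|S|` in these variables, and all its
components of negative degree, as well as those of degree `1`, vanish (with respect
to every partition of `S` and all weights equal to `2`). -/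
def Admissible {l : ℕ} (D : Fin l → Derivation k (RF k l) (RF k l)) (S : Finset (Fin l))
    (α : RF k l) : Prop :=
  α ∈ Phi k l ∧ dependsOnlyOn S α ∧
    (∑ i ∈ S, ((zv i) ^ 2 * D i α + 4 * zv i * α)) = 0 ∧
    IsHomogeneousOn S (-(2 * (S.card : ℤ))) α ∧
    ∀ J ⊆ S, ∀ n : ℤ, (n < 0 ∨ n = 1) → component J (fun _ => 2) n α = 0

/-- `α` is an indecomposable admissible function of the variables `{z_i : i ∈ S}`
(the space `R₀^{|S|}`): admissible, and all the components `(α)₀` with respect to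
partitions of `S` into two nonempty parts vanish. -/
def AdmissibleInd {l : ℕ} (D : Fin l → Derivation k (RF k l) (RF k l))
    (S : Finset (Fin l)) (α : RF k l) : Prop :=
  Admissible D S α ∧
    ∀ J ⊆ S, J ≠ ∅ → J ≠ S → component J (fun _ => 2) 0 α = 0

section Shift

variable {l : ℕ}

/-- Polynomial level substitution `z_s ↦ z_s - z_t` for `s ∈ S`. -/
def shiftAuxP (k : Type) [Field k] (l : ℕ) (S : Finset (Fin l)) (t : Fin l) :
    MvPolynomial (Fin l) k →+* MvPolynomial (Fin l) k :=
  (MvPolynomial.aeval (R := k) fun s =>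
    if s ∈ S then MvPolynomial.X s - MvPolynomial.X t else MvPolynomial.X s).toRingHom

lemma shiftAuxP_injective (S : Finset (Fin l)) (t : Fin l) (ht : t ∉ S) :
    Function.Injective (shiftAuxP k l S t) := by
  have h : ((MvPolynomial.aeval (R := k) fun s =>
      if s ∈ S then MvPolynomial.X s + MvPolynomial.X t
      else MvPolynomial.X s).toRingHom).comp (shiftAuxP k l S t) = RingHom.id _ := by
    apply MvPolynomial.ringHom_ext
    · intro r; simp [shiftAuxP]
    · intro s
      by_cases hs : s ∈ S
      · have hst : s ≠ t := fun hst => ht (hst ▸ hs)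
        simp [shiftAuxP, hs, ht]
      · simp [shiftAuxP, hs]
  intro p q hpq
  have hp := DFunLike.congr_fun h p
  have hq := DFunLike.congr_fun h q
  simp only [RingHom.comp_apply, RingHom.id_apply] at hp hq
  rw [← hp, ← hq, hpq]

/-- The shift operator substituting `z_s - z_t` for `z_s`, for all `s ∈ S`. -/
def shiftT (S : Finset (Fin l)) (t : Fin l) (ht : t ∉ S) : RF k l →+* RF k l :=
  IsFractionRing.lift
    (g := (algebraMap (MvPolynomial (Fin l) k) (RF k l)).comp (shiftAuxP k l S t))
    (fun a b hab =>
      shiftAuxP_injective S t ht (IsFractionRing.injective _ _ hab))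

/-- The operator `ℰ = Σ_{s ∈ S} (-z_s⁻¹ ∂_{z_s} + 2 z_s⁻²)`. -/
def curlyE {l : ℕ} (D : Fin l → Derivation k (RF k l) (RF k l)) (S : Finset (Fin l))
    (β : RF k l) : RF k l :=
  ∑ s ∈ S, (-((zv s)⁻¹ * D s β) + 2 * (zv s) ^ (-2 : ℤ) * β)

end Shift

end Griess

namespace Griess


section Helpers

open MvPolynomial

theorem hlp_const {k : Type} [Field k] {l : ℕ} (c : k) :
    algebraMap (MvPolynomial (Fin l) k) (RF k l) (C c) = algebraMap k (RF k l) c := by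
  rw [IsScalarTower.algebraMap_apply k (MvPolynomial (Fin l) k) (RF k l)]
  rfl

theorem hlp_zv_ne {k : Type} [Field k] {l : ℕ} (i : Fin l) : (zv i : RF k l) ≠ 0 := by
  unfold zv
  rw [Ne, IsFractionRing.to_map_eq_zero_iff]
  exact X_ne_zero i

theorem hlp_zv_sub_ne {k : Type} [Field k] {l : ℕ} (i : Fin l) : (zv i - 1 : RF k l) ≠ 0 := by
  unfold zv
  rw [← map_one (algebraMap (MvPolynomial (Fin l) k) (RF k l)), ← map_sub, Ne,
    IsFractionRing.to_map_eq_zero_iff]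
  intro h
  have := congrArg (MvPolynomial.eval (fun _ => (0 : k))) h
  simp at this

/-- twisted derivations vanishing on generators vanish -/
theorem hlp_der_zero {k : Type} [Field k] {l : ℕ} (φ : RF k l →+* RF k l) (δ : RF k l →+ RF k l)
    (hmul : ∀ x y, δ (x * y) = φ x * δ y + φ y * δ x)
    (hc : ∀ c : k, δ (algebraMap k (RF k l) c) = 0) (hz : ∀ i, δ (zv i) = 0) (x : RF k l) :
    δ x = 0 := by
  have hp : ∀ p : MvPolynomial (Fin l) k, δ (algebraMap _ (RF k l) p) = 0 := by
    intro p
    induction p using MvPolynomial.induction_on with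
    | C a => rw [hlp_const, hc]
    | add p q hp hq => rw [map_add, map_add, hp, hq, add_zero]
    | mul_X p i hp =>
      rw [map_mul, hmul, hp]
      have := hz i
      unfold zv at this
      rw [this]; simp
  obtain ⟨p, q, hq, rfl⟩ := IsFractionRing.div_surjective (A := MvPolynomial (Fin l) k) x
  have hq0 : algebraMap (MvPolynomial (Fin l) k) (RF k l) q ≠ 0 := by
    rw [Ne, IsFractionRing.to_map_eq_zero_iff]
    exact nonZeroDivisors.ne_zero hq
  have h := hmul (algebraMap _ (RF k l) p / algebraMap _ (RF k l) q) (algebraMap _ (RF k l) q)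
  rw [div_mul_cancel₀ _ hq0, hp, hp, mul_zero, zero_add] at h
  have h2 : φ (algebraMap _ (RF k l) q) ≠ 0 := (map_ne_zero φ).2 hq0
  exact (mul_eq_zero.1 h.symm).resolve_left h2

theorem hlp_der_ext {k : Type} [Field k] {l : ℕ} (A B : Derivation k (RF k l) (RF k l))
    (h : ∀ i, A (zv i) = B (zv i)) : A = B := by
  ext x
  have := hlp_der_zero (RingHom.id _) ((A - B : Derivation k (RF k l) (RF k l)) :
    RF k l →ₗ[k] RF k l).toAddMonoidHom (fun x y => (A - B).leibniz x y)
    (fun c => (A - B).map_algebraMap c) (fun i => by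
      show (A - B) (zv i) = 0
      rw [Derivation.sub_apply, h, sub_self]) x
  exact sub_eq_zero.1 this

theorem hlp_hom_ext {k : Type} [Field k] {l : ℕ} (φ ψ : RF k l →+* RF k l)
    (hc : ∀ c : k, φ (algebraMap k (RF k l) c) = ψ (algebraMap k (RF k l) c))
    (hz : ∀ i, φ (zv i) = ψ (zv i)) : φ = ψ := by
  apply IsFractionRing.ringHom_ext (A := MvPolynomial (Fin l) k)
  intro p
  have : φ.comp (algebraMap (MvPolynomial (Fin l) k) (RF k l))
      = ψ.comp (algebraMap (MvPolynomial (Fin l) k) (RF k l)) := by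
    apply MvPolynomial.ringHom_ext
    · intro r; simp only [RingHom.comp_apply, hlp_const, hc]
    · exact hz
  exact DFunLike.congr_fun this p

/-- existence of affine substitutions -/
theorem hlp_aff {k : Type} [Field k] {l : ℕ} (a b : k) (ha : a * a = 1) :
    ∃ φ : RF k l →+* RF k l, (∀ c : k, φ (algebraMap k (RF k l) c) = algebraMap k (RF k l) c) ∧
      ∀ i, φ (zv i) = algebraMap k (RF k l) a * zv i + algebraMap k (RF k l) b := by
  let f : MvPolynomial (Fin l) k →ₐ[k] MvPolynomial (Fin l) k := aeval fun i => C a * X i + C b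
  let g : MvPolynomial (Fin l) k →ₐ[k] MvPolynomial (Fin l) k :=
    aeval fun i => C a * X i - C a * C b
  have hgf : g.comp f = AlgHom.id k _ := by
    apply MvPolynomial.algHom_ext
    intro i
    have : (C a * C a : MvPolynomial (Fin l) k) = 1 := by rw [← C_mul, ha, C_1]
    simp only [f, g, AlgHom.comp_apply, aeval_X, map_add, map_mul, AlgHom.id_apply]
    rw [← algebraMap_eq, AlgHom.commutes, AlgHom.commutes, algebraMap_eq]
    linear_combination (X i - C b) * this
  have hinj : Function.Injective
      ((algebraMap (MvPolynomial (Fin l) k) (RF k l)).comp f.toRingHom) := by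
    intro p q hpq
    have h1 : f p = f q := IsFractionRing.injective _ _ hpq
    have h2 := congrArg g h1
    have hp := DFunLike.congr_fun hgf p
    have hq := DFunLike.congr_fun hgf q
    simp only [AlgHom.comp_apply, AlgHom.id_apply] at hp hq
    rw [← hp, ← hq, h2]
  refine ⟨IsFractionRing.lift hinj, ?_, ?_⟩
  · intro c
    rw [← hlp_const, IsFractionRing.lift_algebraMap]
    show algebraMap _ _ (f (C c)) = _
    rw [← algebraMap_eq, AlgHom.commutes]
  · intro i
    unfold zv
    rw [IsFractionRing.lift_algebraMap]
    show algebraMap _ _ (f (X i)) = _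
    simp only [f, aeval_X, map_add, map_mul, hlp_const]

/-- flow of translations -/
def hlpT (k : Type) [Field k] (l : ℕ) :
    MvPolynomial (Fin l) k →ₐ[k] Polynomial (MvPolynomial (Fin l) k) :=
  aeval fun i => Polynomial.C (X i) + Polynomial.X

/-- polynomial version of Delta -/
def hlpF (k : Type) [Field k] (l : ℕ) :
    Derivation k (MvPolynomial (Fin l) k) (MvPolynomial (Fin l) k) :=
  mkDerivation k fun _ => 1

theorem hlp_C_map {k : Type} [Field k] {l : ℕ}
    (f : MvPolynomial (Fin l) k →ₐ[k] Polynomial (MvPolynomial (Fin l) k)) (a : k) :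
    f (C a) = Polynomial.C (C a) := by
  rw [← algebraMap_eq, AlgHom.commutes]; rfl

theorem hlpT_deriv {k : Type} [Field k] {l : ℕ} (p : MvPolynomial (Fin l) k) :
    Polynomial.derivative (hlpT k l p) = hlpT k l (hlpF k l p) := by
  induction p using MvPolynomial.induction_on with
  | C a => rw [hlp_C_map, hlpF, derivation_C]; simp
  | add p q hp hq => simp only [map_add, hp, hq]
  | mul_X p i hp =>
    rw [map_mul, Polynomial.derivative_mul, hp, Derivation.leibniz, map_add, smul_eq_mul,
      smul_eq_mul, map_mul, map_mul]
    have : hlpF k l (X i) = 1 := by rw [hlpF, mkDerivation_X]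
    rw [this]
    have : Polynomial.derivative (hlpT k l (X i)) = 1 := by simp [hlpT]
    rw [this, map_one]
    ring

theorem hlpT_zero {k : Type} [Field k] {l : ℕ} (p : MvPolynomial (Fin l) k) :
    Polynomial.eval 0 (hlpT k l p) = p := by
  have h : (Polynomial.evalRingHom (0 : MvPolynomial (Fin l) k)).comp (hlpT k l).toRingHom
      = RingHom.id _ := by
    apply MvPolynomial.ringHom_ext
    · intro r
      show Polynomial.eval 0 (hlpT k l (C r)) = C r
      rw [hlp_C_map, Polynomial.eval_C]
    · intro i; simp [hlpT]
  exact DFunLike.congr_fun h p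

theorem hlpF_nilp {k : Type} [Field k] {l : ℕ} (p : MvPolynomial (Fin l) k) :
    ∃ N : ℕ, (hlpF k l)^[N] p = 0 := by
  refine ⟨(hlpT k l p).natDegree + 1, ?_⟩
  have h : ∀ n : ℕ, Polynomial.derivative^[n] (hlpT k l p) = hlpT k l ((hlpF k l)^[n] p) := by
    intro n
    induction n with
    | zero => rfl
    | succ n ih => rw [Function.iterate_succ_apply', ih, hlpT_deriv, Function.iterate_succ_apply']
  have h1 := h ((hlpT k l p).natDegree + 1)
  rw [Polynomial.iterate_derivative_eq_zero (Nat.lt_succ_self _)] at h1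
  rw [← hlpT_zero ((hlpF k l)^[_] p), ← h1, Polynomial.eval_zero]

theorem hlpF_shift {k : Type} [Field k] [CharZero k] {l : ℕ} (p : MvPolynomial (Fin l) k)
    (hp : hlpF k l p = 0) : hlpT k l p = Polynomial.C p := by
  have h := hlpT_deriv p
  rw [hp, map_zero] at h
  have h2 := Polynomial.eq_C_of_derivative_eq_zero h
  have h3 := hlpT_zero p
  rw [h2, Polynomial.eval_C] at h3
  rw [h2, h3]

theorem hlpF_dvd {k : Type} [Field k] [CharZero k] {l : ℕ} (p : MvPolynomial (Fin l) k)
    (hp : p ∣ hlpF k l p) : hlpF k l p = 0 := by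
  have h : hlpT k l p ∣ Polynomial.derivative (hlpT k l p) := by
    rw [hlpT_deriv]; exact map_dvd _ hp
  rw [Polynomial.dvd_derivative_iff, hlpT_deriv] at h
  rw [← hlpT_zero (hlpF k l p), h, Polynomial.eval_zero]

theorem hlpF_alg {k : Type} [Field k] {l : ℕ} (F : Derivation k (RF k l) (RF k l))
    (hF : ∀ i, F (zv i) = 1) (p : MvPolynomial (Fin l) k) :
    F (algebraMap _ (RF k l) p) = algebraMap _ (RF k l) (hlpF k l p) := by
  induction p using MvPolynomial.induction_on with
  | C a => rw [hlp_const, Derivation.map_algebraMap, hlpF, derivation_C, map_zero]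
  | add p q hp hq => simp only [map_add, hp, hq]
  | mul_X p i hp =>
    have h1 : hlpF k l (X i) = 1 := by rw [hlpF, mkDerivation_X]
    have h2 := hF i
    unfold zv at h2
    rw [map_mul, Derivation.leibniz, hp, h2, Derivation.leibniz, h1]
    simp

theorem hlp_shift_inv {k : Type} [Field k] [CharZero k] {l : ℕ}
    (F : Derivation k (RF k l) (RF k l)) (hF : ∀ i, F (zv i) = 1) (x : RF k l) (hx : F x = 0)
    (φ ψ : RF k l →+* RF k l) (c : RF k l)
    (hφ : ∀ c : k, φ (algebraMap k (RF k l) c) = algebraMap k (RF k l) c)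
    (hψ : ∀ c : k, ψ (algebraMap k (RF k l) c) = algebraMap k (RF k l) c)
    (h : ∀ i, ψ (zv i) = φ (zv i) + c) : ψ x = φ x := by
  have hpoly : ∀ p : MvPolynomial (Fin l) k, hlpF k l p = 0 →
      ψ (algebraMap _ (RF k l) p) = φ (algebraMap _ (RF k l) p) := by
    intro p hp
    have h1 : (Polynomial.eval₂RingHom (φ.comp (algebraMap _ (RF k l))) c).comp
        (hlpT k l).toRingHom = ψ.comp (algebraMap _ (RF k l)) := by
      apply MvPolynomial.ringHom_ext
      · intro r
        show Polynomial.eval₂ _ c (hlpT k l (C r)) = ψ (algebraMap _ (RF k l) (C r))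
        rw [hlp_C_map, Polynomial.eval₂_C, RingHom.comp_apply, hlp_const, hφ, hψ]
      · intro i
        have := h i
        unfold zv at this
        simp [hlpT, this]
    have h2 := DFunLike.congr_fun h1 p
    have h3 : Polynomial.eval₂ (φ.comp (algebraMap _ (RF k l))) c (hlpT k l p)
      = ψ (algebraMap _ (RF k l) p) := h2
    rw [hlpF_shift p hp, Polynomial.eval₂_C] at h3
    exact h3.symm
  obtain ⟨p, q, hpq, rfl⟩ := IsFractionRing.exists_reduced_fraction
    (A := MvPolynomial (Fin l) k) x
  rw [IsFractionRing.mk'_eq_div] at hx ⊢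
  have hq0 : algebraMap (MvPolynomial (Fin l) k) (RF k l) q ≠ 0 := by
    rw [Ne, IsFractionRing.to_map_eq_zero_iff]
    exact nonZeroDivisors.ne_zero q.2
  rw [Derivation.leibniz_div, hlpF_alg F hF, hlpF_alg F hF, smul_eq_mul, mul_eq_zero] at hx
  have hx := hx.resolve_left (pow_ne_zero _ (inv_ne_zero hq0))
  rw [smul_eq_mul, smul_eq_mul, ← map_mul, ← map_mul, sub_eq_zero] at hx
  have hx : (q : MvPolynomial (Fin l) k) * hlpF k l p = p * hlpF k l q :=
    IsFractionRing.injective _ _ hx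
  have hq : hlpF k l (q : MvPolynomial (Fin l) k) = 0 := by
    apply hlpF_dvd
    exact hpq.symm.dvd_of_dvd_mul_left ⟨_, hx.symm⟩
  have hp : hlpF k l p = 0 := by
    rw [hq, mul_zero] at hx
    exact (mul_eq_zero.1 hx).resolve_left (nonZeroDivisors.ne_zero q.2)
  rw [map_div₀, map_div₀, hpoly _ hp, hpoly _ hq]

theorem hlp_scale_X {k : Type} [Field k] {l : ℕ} (i : Fin l) :
    scaleAux k l Finset.univ (X i) = Polynomial.X * Polynomial.C (X i) := by
  simp [scaleAux]

theorem hlp_scale_C {k : Type} [Field k] {l : ℕ} (c : k) :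
    scaleAux k l Finset.univ (C c) = Polynomial.C (C c) := by
  simp [scaleAux]

theorem hlp_scale_one {k : Type} [Field k] {l : ℕ} (p : MvPolynomial (Fin l) k) :
    Polynomial.eval 1 (scaleAux k l Finset.univ p) = p := by
  have h : (Polynomial.evalRingHom (1 : MvPolynomial (Fin l) k)).comp
      (scaleAux k l Finset.univ) = RingHom.id _ := by
    apply MvPolynomial.ringHom_ext
    · intro r; simp [hlp_scale_C]
    · intro i; simp [hlp_scale_X]
  exact DFunLike.congr_fun h p

theorem hlp_hom_eq {k : Type} [Field k] {l : ℕ} (p q : MvPolynomial (Fin l) k) (hq : q ≠ 0)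
    (m : ℤ) (h : IsHomogeneousOn Finset.univ m
      (algebraMap _ (RF k l) p / algebraMap _ (RF k l) q)) :
    ∃ a b : ℕ, m = (b : ℤ) - a ∧
      scaleAux k l Finset.univ p * Polynomial.C q * Polynomial.X ^ a
        = Polynomial.X ^ b * Polynomial.C p * scaleAux k l Finset.univ q := by
  refine ⟨(-m).toNat, m.toNat, (Int.toNat_sub_toNat_neg m).symm, ?_⟩
  have hm := (Int.toNat_sub_toNat_neg m).symm
  set a := (-m).toNat
  set b := m.toNat
  apply toRatFuncHom_injective
  have hS : ∀ r : MvPolynomial (Fin l) k, scaleJ Finset.univ (algebraMap _ (RF k l) r)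
      = toRatFuncHom k l (scaleAux k l Finset.univ r) := by
    intro r
    exact IsFractionRing.lift_algebraMap (g := (toRatFuncHom k l).comp (scaleAux k l Finset.univ))
      (fun a b hab => scaleAux_injective Finset.univ (toRatFuncHom_injective hab)) r
  have hC : ∀ r : MvPolynomial (Fin l) k, toRatFuncHom k l (Polynomial.C r)
      = RatFunc.C (algebraMap _ (RF k l) r) := by
    intro r
    simp [toRatFuncHom]
  have hX : toRatFuncHom k l Polynomial.X = RatFunc.X := by
    simp [toRatFuncHom]
  have hq0 : algebraMap (MvPolynomial (Fin l) k) (RF k l) q ≠ 0 := by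
    rwa [Ne, IsFractionRing.to_map_eq_zero_iff]
  unfold IsHomogeneousOn at h
  rw [map_div₀, map_div₀, hS, hS, hm, zpow_sub₀ RatFunc.X_ne_zero, zpow_natCast,
    zpow_natCast] at h
  simp only [map_mul, map_pow, hC, hX]
  have h1 : toRatFuncHom k l (scaleAux k l Finset.univ q) ≠ 0 := by
    rw [← hS]; exact (map_ne_zero _).2 hq0
  have h2 : (RatFunc.C (algebraMap _ (RF k l) q) : RatFunc (RF k l)) ≠ 0 :=
    (map_ne_zero _).2 hq0
  have h3 : (RatFunc.X : RatFunc (RF k l)) ^ a ≠ 0 := pow_ne_zero _ RatFunc.X_ne_zero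
  rw [div_mul_div_comm, div_eq_div_iff h1 (mul_ne_zero h3 h2)] at h
  linear_combination h

/-- polynomial Euler operator -/
def hlpE (k : Type) [Field k] (l : ℕ) :
    Derivation k (MvPolynomial (Fin l) k) (MvPolynomial (Fin l) k) :=
  mkDerivation k fun i => X i

theorem hlpE_deriv {k : Type} [Field k] {l : ℕ} (p : MvPolynomial (Fin l) k) :
    Polynomial.X * Polynomial.derivative (scaleAux k l Finset.univ p)
      = scaleAux k l Finset.univ (hlpE k l p) := by
  induction p using MvPolynomial.induction_on with
  | C a => rw [hlp_scale_C, hlpE, derivation_C]; simp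
  | add p q hp hq => simp only [map_add, mul_add, hp, hq]
  | mul_X p i hp =>
    rw [map_mul, Polynomial.derivative_mul, Derivation.leibniz, map_add, smul_eq_mul,
      smul_eq_mul, map_mul, map_mul, ← hp]
    have : hlpE k l (X i) = X i := by rw [hlpE, mkDerivation_X]
    rw [this, hlp_scale_X]
    have : Polynomial.derivative (Polynomial.X * Polynomial.C (X i))
      = (Polynomial.C (X i) : Polynomial (MvPolynomial (Fin l) k)) := by simp
    rw [this]
    ring

theorem hlpE_alg {k : Type} [Field k] {l : ℕ} (E : Derivation k (RF k l) (RF k l))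
    (hE : ∀ i, E (zv i) = zv i) (p : MvPolynomial (Fin l) k) :
    E (algebraMap _ (RF k l) p) = algebraMap _ (RF k l) (hlpE k l p) := by
  induction p using MvPolynomial.induction_on with
  | C a => rw [hlp_const, Derivation.map_algebraMap, hlpE, derivation_C, map_zero]
  | add p q hp hq => simp only [map_add, hp, hq]
  | mul_X p i hp =>
    have h1 : hlpE k l (X i) = X i := by rw [hlpE, mkDerivation_X]
    have h2 := hE i
    unfold zv at h2
    rw [map_mul, Derivation.leibniz, hp, h2, Derivation.leibniz, h1]
    simp

theorem hlp_euler {k : Type} [Field k] {l : ℕ} (E : Derivation k (RF k l) (RF k l))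
    (hE : ∀ i, E (zv i) = zv i) (x : RF k l) (m : ℤ)
    (h : IsHomogeneousOn Finset.univ m x) : E x = (m : RF k l) * x := by
  obtain ⟨p, q, hq, rfl⟩ := IsFractionRing.div_surjective (A := MvPolynomial (Fin l) k) x
  have hq' := nonZeroDivisors.ne_zero hq
  have hq0 : algebraMap (MvPolynomial (Fin l) k) (RF k l) q ≠ 0 := by
    rwa [Ne, IsFractionRing.to_map_eq_zero_iff]
  obtain ⟨a, b, hab, h1⟩ := hlp_hom_eq p q hq' m h
  have hd : ∀ r : MvPolynomial (Fin l) k,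
      Polynomial.eval 1 (Polynomial.derivative (scaleAux k l Finset.univ r)) = hlpE k l r := by
    intro r
    have := congrArg (Polynomial.eval 1) (hlpE_deriv r)
    rwa [Polynomial.eval_mul, Polynomial.eval_X, one_mul, hlp_scale_one] at this
  have h2 := congrArg (fun f => Polynomial.eval 1 (Polynomial.derivative f)) h1
  simp only [Polynomial.derivative_mul, Polynomial.derivative_C, Polynomial.derivative_X_pow,
    Polynomial.eval_add, Polynomial.eval_mul, hd, hlp_scale_one, Polynomial.eval_C,
    Polynomial.eval_pow, Polynomial.eval_X, one_pow, mul_one, mul_zero, add_zero, one_mul,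
    Polynomial.eval_zero, Polynomial.eval_natCast, Polynomial.map_natCast] at h2
  have h3 := congrArg (algebraMap _ (RF k l)) h2
  simp only [map_add, map_mul, map_natCast] at h3
  rw [Derivation.leibniz_div, hlpE_alg E hE, hlpE_alg E hE, hab]
  simp only [smul_eq_mul]
  push_cast
  field_simp
  linear_combination h3

theorem hlp_neg {k : Type} [Field k] {l : ℕ} (σ : RF k l →+* RF k l)
    (hc : ∀ c : k, σ (algebraMap k (RF k l) c) = algebraMap k (RF k l) c)
    (hσ : ∀ i, σ (zv i) = - zv i) (x : RF k l) (m : ℤ)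
    (h : IsHomogeneousOn Finset.univ m x) : σ x = (-1) ^ m * x := by
  obtain ⟨p, q, hq, rfl⟩ := IsFractionRing.div_surjective (A := MvPolynomial (Fin l) k) x
  have hq' := nonZeroDivisors.ne_zero hq
  have hq0 : algebraMap (MvPolynomial (Fin l) k) (RF k l) q ≠ 0 := by
    rwa [Ne, IsFractionRing.to_map_eq_zero_iff]
  obtain ⟨a, b, hab, h1⟩ := hlp_hom_eq p q hq' m h
  have hS : ∀ r : MvPolynomial (Fin l) k,
      algebraMap _ (RF k l) (Polynomial.eval (-1) (scaleAux k l Finset.univ r))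
        = σ (algebraMap _ (RF k l) r) := by
    intro r
    have : ((algebraMap _ (RF k l)).comp
        (Polynomial.evalRingHom (-1 : MvPolynomial (Fin l) k))).comp
        (scaleAux k l Finset.univ) = σ.comp (algebraMap _ (RF k l)) := by
      apply MvPolynomial.ringHom_ext
      · intro r; simp only [RingHom.comp_apply, hlp_scale_C, hlp_const, hc]
        simp [hlp_const]
      · intro i
        have := hσ i
        unfold zv at this
        simp [hlp_scale_X, this]
    exact DFunLike.congr_fun this r
  have h2 := congrArg (fun f => algebraMap _ (RF k l) (Polynomial.eval (-1) f)) h1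
  simp only [Polynomial.eval_mul, Polynomial.eval_C, Polynomial.eval_pow, Polynomial.eval_X,
    map_mul, hS, map_pow, map_neg, map_one] at h2
  have hσq : σ (algebraMap _ (RF k l) q) ≠ 0 := (map_ne_zero σ).2 hq0
  have hn : (-1 : RF k l) ≠ 0 := by simp
  rw [map_div₀, hab, zpow_sub₀ hn, zpow_natCast, zpow_natCast, div_mul_div_comm,
    div_eq_div_iff hσq (mul_ne_zero (pow_ne_zero _ hn) hq0)]
  linear_combination h2

theorem hlp_nilp {k : Type} [Field k] {l : ℕ}
    (F : Derivation k (RF k l) (RF k l)) (hF : ∀ i, F (zv i) = 1) (x : RF k l)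
    (hx : x ∈ Phi k l) : ∃ N : ℕ, F^[N] x = 0 := by
  obtain ⟨p, e, rfl⟩ := hx
  set u : RF k l := ∏ i : Fin l, ∏ j : Fin l, (if i < j then (zv i - zv j) ^ e i j else 1)
  have hprod : ∀ (f : Fin l → RF k l), (∀ i, F (f i) = 0) → F (∏ i, f i) = 0 := by
    intro f hf
    have : ∀ s : Finset (Fin l), F (∏ i ∈ s, f i) = 0 := by
      intro s
      induction s using Finset.induction_on with
      | empty => simp
      | insert i s his ih => rw [Finset.prod_insert his, Derivation.leibniz, ih, hf]; simp
    exact this _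
  have hu : F u = 0 := by
    apply hprod; intro i
    apply hprod; intro j
    split_ifs
    · rw [Derivation.leibniz_zpow, map_sub, hF, hF]; simp
    · simp
  obtain ⟨N, hN⟩ := hlpF_nilp p
  refine ⟨N, ?_⟩
  have : ∀ n : ℕ, F^[n] (algebraMap _ (RF k l) p * u)
      = algebraMap _ (RF k l) ((hlpF k l)^[n] p) * u := by
    intro n
    induction n with
    | zero => rfl
    | succ n ih =>
      rw [Function.iterate_succ_apply', ih, Derivation.leibniz, hu, hlpF_alg F hF,
        Function.iterate_succ_apply']
      simp [mul_comm]
  rw [this, hN]; simp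

theorem hlp_sl2 {k : Type} [Field k] [CharZero k] {l : ℕ}
    (F E V : Derivation k (RF k l) (RF k l)) (hF : ∀ i, F (zv i) = 1)
    (hE : ∀ i, E (zv i) = zv i) (hV : ∀ i, V (zv i) = zv i ^ 2) (s : RF k l) (S : ℤ)
    (hs : F s = 2 * (S : RF k l)) (x : RF k l) (hx0 : x ≠ 0) (m : ℤ)
    (hEx : E x = (m : RF k l) * x) (hG : V x + s * x = 0) (hnil : ∃ N : ℕ, F^[N] x = 0) :
    -S ≤ m ∧ (m = -S → F x = 0) := by
  have hFV : ∀ y, F (V y) = V (F y) + 2 * E y := by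
    have : ⁅F, V⁆ = (2 : RF k l) • E := by
      apply hlp_der_ext
      intro i
      rw [Derivation.commutator_apply, hV, hF, Derivation.smul_apply, hE,
        Derivation.leibniz_pow, hF]
      simp
    intro y
    have h := DFunLike.congr_fun this y
    rw [Derivation.commutator_apply, Derivation.smul_apply, smul_eq_mul] at h
    linear_combination h
  have hEF : ∀ y, E (F y) = F (E y) - F y := by
    have : ⁅E, F⁆ = - F := by
      apply hlp_der_ext
      intro i
      rw [Derivation.commutator_apply, hE, hF, Derivation.neg_apply, hF]
      simp
    intro y
    have h := DFunLike.congr_fun this y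
    rw [Derivation.commutator_apply, Derivation.neg_apply] at h
    linear_combination h
  have hFint : ∀ (n : ℤ) y, F ((n : RF k l) * y) = n * F y := by
    intro n y
    rw [Derivation.leibniz, Derivation.map_intCast]; simp
  have hEn : ∀ n : ℕ, E (F^[n] x) = ((m - n : ℤ) : RF k l) * F^[n] x := by
    intro n
    induction n with
    | zero => simpa using hEx
    | succ n ih =>
      rw [Function.iterate_succ_apply', hEF, ih, hFint]
      push_cast; ring
  have hGn : ∀ n : ℕ, V (F^[n+1] x) + s * F^[n+1] x
      = ((-((n + 1) * (2 * (m + S) - n)) : ℤ) : RF k l) * F^[n] x := by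
    intro n
    have key : ∀ y, V (F y) + s * F y = F (V y + s * y) - 2 * E y - 2 * S * y := by
      intro y
      rw [map_add, hFV, Derivation.leibniz, hs]
      simp only [smul_eq_mul]
      ring
    induction n with
    | zero =>
      simp only [Function.iterate_succ_apply', Function.iterate_zero, id]
      rw [key, hG, map_zero, hEx]
      push_cast; ring
    | succ n ih =>
      rw [Function.iterate_succ_apply' F (n+1), key, ih, hEn, hFint, ← Function.iterate_succ_apply' F]
      push_cast; ring
  obtain ⟨n, hn⟩ : ∃ n : ℕ, F^[n] x ≠ 0 ∧ F^[n+1] x = 0 := by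
    by_contra! hcon
    obtain ⟨N, hN⟩ := hnil
    have : ∀ n : ℕ, F^[n] x ≠ 0 := by
      intro n
      induction n with
      | zero => simpa using hx0
      | succ n ih => exact hcon n ih
    exact this N hN
  have h := hGn n
  rw [hn.2, map_zero, mul_zero, add_zero] at h
  have h2 := (mul_eq_zero.1 h.symm).resolve_right hn.1
  have h2' : (-((n + 1) * (2 * (m + S) - n)) : ℤ) = 0 := by exact_mod_cast h2
  have h3 : 2 * (m + S) - (n : ℤ) = 0 := by
    rcases mul_eq_zero.1 (neg_eq_zero.1 h2') with h | h
    · omega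
    · exact h
  refine ⟨by omega, fun hm => ?_⟩
  have : n = 0 := by omega
  subst this
  simpa using hn.2

theorem hlp_inv {k : Type} [Field k] {l : ℕ}
    (F V : Derivation k (RF k l) (RF k l)) (hF : ∀ i, F (zv i) = 1)
    (hV : ∀ i, V (zv i) = zv i ^ 2) (ι : RF k l →+* RF k l)
    (hι : ∀ i, ι (zv i) = (zv i)⁻¹)
    (hc : ∀ c : k, ι (algebraMap k (RF k l) c) = algebraMap k (RF k l) c) (x : RF k l) :
    F (ι x) = - ι (V x) := by
  let A : RF k l →+ RF k l := (F : RF k l →ₗ[k] RF k l).toAddMonoidHom.comp ι.toAddMonoidHom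
  let B : RF k l →+ RF k l := ι.toAddMonoidHom.comp (V : RF k l →ₗ[k] RF k l).toAddMonoidHom
  have hAB : ∀ y, (A + B) y = F (ι y) + ι (V y) := fun y => rfl
  have := hlp_der_zero ι (A + B) (fun y z => by
    simp only [hAB, map_mul, Derivation.leibniz, smul_eq_mul, map_add]; ring)
    (fun c => by rw [hAB, hc, Derivation.map_algebraMap, Derivation.map_algebraMap]; simp)
    (fun i => by
      rw [hAB, hι, hV, Derivation.leibniz_inv, hF, map_pow, hι]; simp) x
  rw [hAB] at this
  exact eq_neg_of_add_eq_zero_left this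

theorem hlp_logprod {k : Type} [Field k] {l : ℕ}
    (F : Derivation k (RF k l) (RF k l)) (hF : ∀ i, F (zv i) = 1) (n : Fin l → ℤ) :
    F (∏ i, (zv i) ^ (n i)) = (∑ i, (n i : RF k l) * (zv i)⁻¹) * ∏ i, (zv i) ^ (n i) := by
  have : ∀ s : Finset (Fin l), F (∏ i ∈ s, (zv i) ^ (n i))
      = (∑ i ∈ s, (n i : RF k l) * (zv i)⁻¹) * ∏ i ∈ s, (zv i) ^ (n i) := by
    intro s
    induction s using Finset.induction_on with
    | empty => simp
    | insert i s his ih =>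
      rw [Finset.prod_insert his, Derivation.leibniz, ih, Finset.sum_insert his,
        Derivation.leibniz_zpow, hF, zpow_sub_one₀ (hlp_zv_ne i)]
      simp only [smul_eq_mul, zsmul_eq_mul]
      ring
  exact this _

theorem hlp_final {k : Type} [Field k] [CharZero k] {l : ℕ}
    (F V : Derivation k (RF k l) (RF k l)) (hF : ∀ i, F (zv i) = 1)
    (hV : ∀ i, V (zv i) = zv i ^ 2) (ι : RF k l →+* RF k l)
    (hι : ∀ i, ι (zv i) = (zv i)⁻¹)
    (hc : ∀ c : k, ι (algebraMap k (RF k l) c) = algebraMap k (RF k l) c)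
    (d : Fin l → ℤ) (α : RF k l) (m : ℤ) (hhom : IsHomogeneousOn Finset.univ m α)
    (hFα : F α = 0) (hG : V α + (∑ i, ((2 * d i : ℤ) : RF k l) * zv i) * α = 0) :
    (∏ i, (zv i) ^ (-(2 * d i))) * ι α = (-1) ^ m * α := by
  set M : RF k l := ∏ i, (zv i) ^ (-(2 * d i)) with hM
  have hM0 : M ≠ 0 := Finset.prod_ne_zero_iff.2 fun i _ => zpow_ne_zero _ (hlp_zv_ne i)
  have hβ : F (M * ι α) = 0 := by
    rw [Derivation.leibniz, hlp_inv F V hF hV ι hι hc, hM, hlp_logprod F hF]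
    have h := congrArg ι hG
    simp only [map_add, map_mul, map_sum, map_zero, hι, map_intCast] at h
    simp only [smul_eq_mul, Int.cast_neg, neg_mul, Finset.sum_neg_distrib]
    linear_combination (-(∏ i, (zv i : RF k l) ^ (-(2 * d i)))) * h
  obtain ⟨τ, hτc, hτ⟩ := hlp_aff (k := k) (l := l) 1 (-1) (by simp)
  obtain ⟨σ, hσc, hσ⟩ := hlp_aff (k := k) (l := l) (-1) 0 (by simp)
  simp only [map_one, one_mul, map_neg, map_zero, add_zero, neg_mul, ← sub_eq_add_neg] at hτ hσ
  have h1 : τ (M * ι α) = M * ι α :=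
    hlp_shift_inv F hF _ hβ (RingHom.id _) τ (-1) (fun _ => rfl) hτc
      (fun i => by rw [hτ, RingHom.id_apply, sub_eq_add_neg])
  have h2 : ι (τ (ι (σ α))) = τ (ι α) := by
    refine hlp_shift_inv F hF α hFα (τ.comp ι) (ι.comp (τ.comp (ι.comp σ))) 1
      (fun c => by simp only [RingHom.comp_apply, hc, hτc])
      (fun c => by simp only [RingHom.comp_apply, hc, hτc, hσc]) (fun i => ?_)
    have ha := hlp_zv_ne (k := k) i
    have hb := hlp_zv_sub_ne (k := k) i
    have hb' : (1 - zv i : RF k l) ≠ 0 := by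
      rw [← neg_sub]; exact neg_ne_zero.2 hb
    simp only [RingHom.comp_apply, hσ, map_neg, hι, map_inv₀, hτ, map_sub, map_one]
    have hcc : ((zv i)⁻¹ - 1 : RF k l) = (1 - zv i) / zv i := by field_simp
    rw [hcc]
    field_simp
    ring
  have h3 : ι (ι α) = α := by
    have : ι.comp ι = RingHom.id _ := hlp_hom_ext _ _
      (fun c => by simp only [RingHom.comp_apply, hc, RingHom.id_apply])
      (fun i => by simp only [RingHom.comp_apply, hι, map_inv₀, inv_inv, RingHom.id_apply])
    exact DFunLike.congr_fun this α
  rw [hlp_neg σ hσc hσ α m hhom] at h2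
  simp only [map_mul, map_zpow₀, map_neg, map_one] at h2
  have h4 : ι M = M⁻¹ := by
    rw [hM, map_prod, ← Finset.prod_inv_distrib]
    refine Finset.prod_congr rfl fun i _ => ?_
    rw [map_zpow₀, hι, inv_zpow]
  have h5 : ι (τ M) = τ M * M⁻¹ := by
    rw [hM, map_prod, map_prod, ← Finset.prod_inv_distrib, ← Finset.prod_mul_distrib]
    refine Finset.prod_congr rfl fun i _ => ?_
    have ha := hlp_zv_ne (k := k) i
    rw [map_zpow₀, map_zpow₀, hτ, map_sub, hι, map_one]
    have hcc : ((zv i)⁻¹ - 1 : RF k l) = (-(zv i - 1)) / zv i := by field_simp; ring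
    rw [hcc, div_zpow, Even.neg_zpow (by simp), div_eq_mul_inv]
  have h6 := congrArg ι h1
  simp only [map_mul] at h6 h1
  rw [h3, h4, h5] at h6
  have h7 : τ M * ι (τ (ι α)) = α := by
    have := congrArg (fun y => M * y) h6
    field_simp at this
    linear_combination this
  rw [← h1, ← h2]
  linear_combination (-1) ^ m * h7

theorem hlp_sum {k : Type} [Field k] {l : ℕ} (D : Fin l → Derivation k (RF k l) (RF k l))
    (y : RF k l) : (∑ i, D i) y = ∑ i, D i y := by
  have : ∀ s : Finset (Fin l), (∑ i ∈ s, D i) y = ∑ i ∈ s, D i y := by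
    intro s
    induction s using Finset.induction_on with
    | empty => simp
    | insert i s his ih => rw [Finset.sum_insert his, Finset.sum_insert his, Derivation.add_apply, ih]
  exact this _

end Helpers

/-- if `α ∈ Φ^l` is nonzero, homogeneous of degree `dα` and
`(2d₁,…,2d_l)`-regular, then `dα ≥ -(d₁+⋯+d_l)`; and in case of equality,
`Δα = 0` and `α* = α`, where
`α* = (-1)^{Σdᵢ}·z₁^{-2d₁}⋯z_l^{-2d_l}·α(z₁⁻¹,…,z_l⁻¹)` (the substitution
`z_i ↦ z_i⁻¹` being expressed by the ring homomorphism `ι`). -/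
theorem statement2 {k : Type} [Field k] [CharZero k] {l : ℕ}
    (D : Fin l → Derivation k (RF k l) (RF k l)) (hD : IsPartialDeriv D)
    (d : Fin l → ℤ) (α : RF k l) (hΦ : α ∈ Phi k l) (hne : α ≠ 0)
    (dα : ℤ) (hhom : IsHomogeneousOn Finset.univ dα α)
    (hreg : DeltaStar D (fun i => 2 * d i) α = 0) :
    -(∑ i, d i) ≤ dα ∧
    (dα = -(∑ i, d i) →
      (Delta D α = 0 ∧
        ∀ ι : RF k l →+* RF k l, (∀ i, ι (zv i) = (zv i)⁻¹) →
          (∀ c : k, ι (algebraMap k (RF k l) c) = algebraMap k (RF k l) c) →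
          ((-1 : RF k l) ^ (∑ i, d i)) * (∏ i, (zv i) ^ (-(2 * d i))) * ι α = α)) := by
  classical
  let F : Derivation k (RF k l) (RF k l) := ∑ i, D i
  let E : Derivation k (RF k l) (RF k l) := ∑ i, (zv i : RF k l) • D i
  let V : Derivation k (RF k l) (RF k l) := ∑ i, (zv i ^ 2 : RF k l) • D i
  have hFa : ∀ y, F y = ∑ i, D i y := fun y => by simp [F, hlp_sum]
  have hEa : ∀ y, E y = ∑ i, zv i * D i y := fun y => by simp [E, hlp_sum]
  have hVa : ∀ y, V y = ∑ i, zv i ^ 2 * D i y := fun y => by simp [V, hlp_sum]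
  have hF : ∀ i, F (zv i) = 1 := fun i => by rw [hFa]; simp [hD _ i]
  have hE : ∀ i, E (zv i) = zv i := fun i => by rw [hEa]; simp [hD _ i]
  have hV : ∀ i, V (zv i) = zv i ^ 2 := fun i => by rw [hVa]; simp [hD _ i]
  have hG : V α + (∑ i, ((2 * d i : ℤ) : RF k l) * zv i) * α = 0 := by
    rw [hVa, Finset.sum_mul, ← Finset.sum_add_distrib]
    exact hreg
  have hs : F (∑ i, ((2 * d i : ℤ) : RF k l) * zv i) = 2 * ((∑ i, d i : ℤ) : RF k l) := by
    rw [map_sum, Int.cast_sum, Finset.mul_sum]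
    refine Finset.sum_congr rfl fun i _ => ?_
    rw [Derivation.leibniz, Derivation.map_intCast, hF]
    simp
  obtain ⟨h1, h2⟩ := hlp_sl2 F E V hF hE hV _ _ hs α hne dα (hlp_euler E hE α dα hhom) hG
    (hlp_nilp F hF α hΦ)
  refine ⟨h1, fun hd => ?_⟩
  have hFα := h2 hd
  refine ⟨by rw [← hFα, hFa]; rfl, fun ι hι hc => ?_⟩
  have h3 := hlp_final F V hF hV ι hι hc d α dα hhom hFα hG
  rw [mul_assoc, h3, hd, ← mul_assoc, ← zpow_add₀ (by simp)]
  simp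

end Griess
end
end

section
/- One has R¹ = 0, R² = k·(z₁−z₂)^{−4}, and R³ = R³₀ = k·(z₁−z₂)^{−2}(z₁−z₃)^{−2}(z₂−z₃)^{−2}; that is, the space of admissible functions in one variable is zero, in two variables it is the one-dimensional space spanned by (z₁−z₂)^{−4}, and in three variables both the space of admissible functions and the space of indecomposable admissible functions equal the one-dimensional space spanned by (z₁−z₂)^{−2}(z₁−z₃)^{−2}(z₂−z₃)^{−2}. -/
open scoped Classical

noncomputable section

namespace Griess

section Helpers

open MvPolynomial

variable {k : Type} [Field k]

lemma der_sum {l : ℕ} (D : Fin l → Derivation k (MvPolynomial (Fin l) k) (MvPolynomial (Fin l) k))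
    (p : MvPolynomial (Fin l) k) : (∑ i, D i) p = ∑ i, D i p := by
  have := map_sum (Derivation.coeFnAddMonoidHom (R := k) (A := MvPolynomial (Fin l) k)
    (M := MvPolynomial (Fin l) k)) D Finset.univ
  have h2 := congrFun this p
  rw [Finset.sum_apply] at h2
  exact h2

lemma C_two {l : ℕ} : (C 2 : MvPolynomial (Fin l) k) = 2 := map_ofNat C 2

theorem sl2_inj {k W : Type*} [Field k] [CharZero k] [AddCommGroup W] [Module k W]
    (E F K : W →ₗ[k] W) (h1 : ∀ w, E (F w) = F (E w) - K w)
    (h2 : ∀ w, K (F w) = F (K w) - (2 : k) • F w) (v : W) (μ : ℕ) (hμ : 0 < μ)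
    (hE : E v = 0) (hK : K v = (-(μ : k)) • v) (m : ℕ) (hm : (F ^ m) v = 0) : v = 0 := by
  have hKj : ∀ j : ℕ, K ((F ^ j) v) = (-(μ : k) - 2 * j) • (F ^ j) v := by
    intro j
    induction j with
    | zero => simp [hK]
    | succ j ih =>
      rw [pow_succ', Module.End.mul_apply, h2, ih, map_smul, ← sub_smul]
      congr 1; push_cast; ring
  have hEj : ∀ j : ℕ, E ((F ^ (j + 1)) v) = (((j : k) + 1) * (μ + j)) • (F ^ j) v := by
    intro j
    induction j with
    | zero => simp [h1, hE, hK]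
    | succ j ih =>
      rw [pow_succ', Module.End.mul_apply, h1, ih, map_smul, hKj, ← Module.End.mul_apply F,
        ← pow_succ', ← sub_smul]
      congr 1; push_cast; ring
  induction m with
  | zero => simpa using hm
  | succ m ih =>
    apply ih
    have := hEj m
    rw [hm, map_zero] at this
    rcases smul_eq_zero.1 this.symm with h | h
    · exfalso
      have : ((m + 1) * (μ + m) : ℕ) = 0 := by exact_mod_cast h
      rcases Nat.mul_eq_zero.1 this with h | h <;> omega
    · exact h

def opF (k : Type) [Field k] (l : ℕ) :
    Derivation k (MvPolynomial (Fin l) k) (MvPolynomial (Fin l) k) :=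
  mkDerivation k fun _ => 1
def opH (k : Type) [Field k] (l : ℕ) :
    Derivation k (MvPolynomial (Fin l) k) (MvPolynomial (Fin l) k) :=
  mkDerivation k fun i => X i
def opL (k : Type) [Field k] (l : ℕ) :
    Derivation k (MvPolynomial (Fin l) k) (MvPolynomial (Fin l) k) :=
  mkDerivation k fun i => X i ^ 2

lemma opF_eq {l : ℕ} (p : MvPolynomial (Fin l) k) : opF k l p = ∑ i, pderiv i p := by
  have : opF k l = ∑ i, pderiv i := by
    apply MvPolynomial.derivation_ext
    intro j
    simp [opF, mkDerivation_X, der_sum, pderiv_X, Pi.single_apply]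
  rw [this, der_sum]

lemma opH_eq {l : ℕ} (p : MvPolynomial (Fin l) k) : opH k l p = ∑ i, X i * pderiv i p := by
  have : opH k l = ∑ i, (X i : MvPolynomial (Fin l) k) • pderiv i := by
    apply MvPolynomial.derivation_ext
    intro j
    simp [opH, mkDerivation_X, der_sum, pderiv_X, Pi.single_apply]
  rw [this, der_sum]; rfl

lemma opL_eq {l : ℕ} (p : MvPolynomial (Fin l) k) : opL k l p = ∑ i, X i ^ 2 * pderiv i p := by
  have : opL k l = ∑ i, (X i ^ 2 : MvPolynomial (Fin l) k) • pderiv i := by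
    apply MvPolynomial.derivation_ext
    intro j
    simp [opL, mkDerivation_X, der_sum, pderiv_X, Pi.single_apply]
  rw [this, der_sum]; rfl

lemma opFL {l : ℕ} (p : MvPolynomial (Fin l) k) :
    opF k l (opL k l p) - opL k l (opF k l p) = 2 * opH k l p := by
  have : ⁅opF k l, opL k l⁆ = (2 : MvPolynomial (Fin l) k) • opH k l := by
    apply MvPolynomial.derivation_ext
    intro j
    rw [Derivation.commutator_apply]
    simp [opF, opH, opL, mkDerivation_X, Derivation.leibniz_pow]
  rw [← Derivation.commutator_apply, this]; rfl

lemma opHF {l : ℕ} (p : MvPolynomial (Fin l) k) :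
    opH k l (opF k l p) = opF k l (opH k l p) - opF k l p := by
  have : ⁅opF k l, opH k l⁆ = opF k l := by
    apply MvPolynomial.derivation_ext
    intro j
    rw [Derivation.commutator_apply]
    simp [opF, opH, mkDerivation_X]
  have h2 := Derivation.commutator_apply (D1 := opF k l) (D2 := opH k l) p
  rw [this] at h2
  linear_combination h2

lemma opF_e1 {l : ℕ} : opF k l (∑ i, X i) = (l : MvPolynomial (Fin l) k) := by
  simp [opF, map_sum, mkDerivation_X]

lemma opF_X {l : ℕ} (i : Fin l) : opF k l (X i) = 1 := by
  simp [opF, mkDerivation_X]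

lemma opF_two {l : ℕ} : opF k l 2 = 0 := by
  exact_mod_cast (opF k l).map_natCast 2

lemma opF_homog {l : ℕ} {p : MvPolynomial (Fin l) k} {d : ℕ} (h : p.IsHomogeneous d) :
    (opF k l p).IsHomogeneous (d - 1) := by
  rw [opF_eq]
  exact IsHomogeneous.sum _ _ _ fun i _ => h.pderiv

lemma opF_nilp {l : ℕ} {d : ℕ} : ∀ {p : MvPolynomial (Fin l) k} (_ : p.IsHomogeneous d),
    (((opF k l : MvPolynomial (Fin l) k →ₗ[k] MvPolynomial (Fin l) k)) ^ (d + 1)) p = 0 := by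
  induction d with
  | zero =>
    intro p h
    have : p = C (coeff 0 p) := by
      rw [← totalDegree_eq_zero_iff_eq_C]
      exact Nat.le_zero.1 h.totalDegree_le
    rw [this]; simp
  | succ d ih =>
    intro p h
    rw [pow_succ, Module.End.mul_apply]
    exact ih (by simpa using opF_homog h)

lemma opF_zero [CharZero k] {l : ℕ} {p : MvPolynomial (Fin l) k} {d n : ℕ}
    (h : p.IsHomogeneous d) (hn : n * l = 2 * d)
    (hL : opL k l p = (n : MvPolynomial (Fin l) k) * (∑ i, X i) * p) : opF k l p = 0 := by
  have hH : opH k l p = (d : MvPolynomial (Fin l) k) * p := by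
    rw [opH_eq, h.sum_X_mul_pderiv, nsmul_eq_mul]
  have hnl : (n : MvPolynomial (Fin l) k) * l = 2 * d := by exact_mod_cast hn
  have hHF := opHF p
  rw [hH, Derivation.leibniz] at hHF
  simp only [Derivation.map_natCast, smul_eq_mul, mul_zero, add_zero] at hHF
  refine sl2_inj (k := k)
    ((opL k l : MvPolynomial (Fin l) k →ₗ[k] MvPolynomial (Fin l) k)
      - LinearMap.mulLeft k ((n : MvPolynomial (Fin l) k) * ∑ i, X i))
    (opF k l : MvPolynomial (Fin l) k →ₗ[k] MvPolynomial (Fin l) k)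
    ((2 : k) • (opH k l : MvPolynomial (Fin l) k →ₗ[k] MvPolynomial (Fin l) k)
      - ((n * l : ℕ) : k) • LinearMap.id) ?_ ?_ (opF k l p) 2 (by norm_num) ?_ ?_ _
      (opF_nilp (opF_homog h))
  · intro w
    have := opFL w
    simp [opF_X, Derivation.leibniz, smul_eq_C_mul, C_two] 
    linear_combination -this
  · intro w
    have := opHF w
    simp [Derivation.leibniz, smul_eq_C_mul, C_two, opF_two]
    linear_combination 2 * this
  · have := opFL p
    rw [hL, hH] at this
    simp [Derivation.leibniz, opF_X] at this ⊢
    linear_combination -this + p * hnl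
  · simp [hHF, smul_eq_C_mul, hn]
    ring

lemma coeff_theta {l : ℕ} (p : MvPolynomial (Fin l) k) (i : Fin l) (a : Fin l →₀ ℕ) :
    coeff a (X i * pderiv i p) = a i * coeff a p := by
  induction p using MvPolynomial.induction_on' with
  | monomial u c =>
    rw [pderiv_monomial]
    by_cases h : u i = 0
    · simp only [h, Nat.cast_zero, mul_zero, monomial_zero, coeff_zero, coeff_monomial]
      split_ifs with h2
      · subst h2; simp [h]
      · simp
    · rw [X, monomial_mul]
      have : Finsupp.single i 1 + (u - Finsupp.single i 1) = u := by
        apply add_tsub_cancel_of_le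
        rw [Finsupp.single_le_iff]; omega
      rw [this, coeff_monomial, coeff_monomial]
      split_ifs with h2
      · subst h2; ring
      · simp
  | add p q hp hq => rw [map_add, mul_add, coeff_add, hp, hq, coeff_add]; ring

lemma wronsk_degree [CharZero k] {l : ℕ} {P V : MvPolynomial (Fin l) k} (hP : P ≠ 0) (hV : V ≠ 0)
    (h : ∀ i, V * pderiv i P = P * pderiv i V) :
    MonomialOrder.lex.degree P = MonomialOrder.lex.degree V := by
  have key : ∀ (p : MvPolynomial (Fin l) k) i,
      MonomialOrder.lex.toSyn (MonomialOrder.lex.degree (X i * pderiv i p)) ≤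
      MonomialOrder.lex.toSyn (MonomialOrder.lex.degree p) := by
    intro p i
    rw [MonomialOrder.degree_le_iff]
    intro b hb
    apply MonomialOrder.le_degree
    rw [mem_support_iff, coeff_theta] at hb
    rw [mem_support_iff]
    exact right_ne_zero_of_mul hb
  ext i
  have h1 : V * (X i * pderiv i P) = P * (X i * pderiv i V) := by
    linear_combination X i * h i
  have h2 := congrArg (coeff (MonomialOrder.lex.degree V + MonomialOrder.lex.degree P)) h1
  rw [MonomialOrder.coeff_mul_of_add_of_degree_le le_rfl (key P i), add_comm,
    MonomialOrder.coeff_mul_of_add_of_degree_le le_rfl (key V i), coeff_theta, coeff_theta] at h2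
  have a1 := (MonomialOrder.coeff_degree_ne_zero_iff (m := MonomialOrder.lex)).2 hP
  have a2 := (MonomialOrder.coeff_degree_ne_zero_iff (m := MonomialOrder.lex)).2 hV
  have h3 : ((MonomialOrder.lex.degree P i : ℕ) : k) = (MonomialOrder.lex.degree V i : ℕ) := by
    apply mul_right_cancel₀ (mul_ne_zero a1 a2)
    linear_combination h2
  exact_mod_cast h3

lemma wronsk [CharZero k] {l : ℕ} {P V : MvPolynomial (Fin l) k} (hV : V ≠ 0)
    (h : ∀ i, V * pderiv i P = P * pderiv i V) : ∃ c : k, P = C c * V := by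
  have a2 := (MonomialOrder.coeff_degree_ne_zero_iff (m := MonomialOrder.lex)).2 hV
  refine ⟨coeff (MonomialOrder.lex.degree V) P / coeff (MonomialOrder.lex.degree V) V, ?_⟩
  set c := coeff (MonomialOrder.lex.degree V) P / coeff (MonomialOrder.lex.degree V) V with hc
  by_contra hne
  have hR : P - C c * V ≠ 0 := sub_ne_zero.2 hne
  have hd := wronsk_degree hR hV (fun i => by
    rw [map_sub, pderiv_C_mul]; linear_combination h i)
  have a1 := (MonomialOrder.coeff_degree_ne_zero_iff (m := MonomialOrder.lex)).2 hR
  apply a1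
  rw [hd, coeff_sub, coeff_C_mul, hc]
  field_simp
  simp


lemma scaleJ_alg {l : ℕ} (J : Finset (Fin l)) (p : MvPolynomial (Fin l) k) :
    scaleJ J (algebraMap _ (RF k l) p) = toRatFuncHom k l (scaleAux k l J p) := by
  exact IsFractionRing.lift_algebraMap (K := RF k l)
    (g := (toRatFuncHom k l).comp (scaleAux k l J))
    (fun a b hab => scaleAux_injective J (toRatFuncHom_injective hab)) p

lemma toRF_X {l : ℕ} : toRatFuncHom k l Polynomial.X = RatFunc.X := by
  simp [toRatFuncHom]

lemma toRF_C {l : ℕ} (p : MvPolynomial (Fin l) k) :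
    toRatFuncHom k l (Polynomial.C p) = RatFunc.C (algebraMap _ (RF k l) p) := by
  simp [toRatFuncHom]

lemma scaleJ_zv {l : ℕ} (J : Finset (Fin l)) (i : Fin l) :
    scaleJ J (zv i : RF k l) = if i ∈ J then RatFunc.X * RatFunc.C (zv i : RF k l)
      else RatFunc.C (zv i : RF k l) := by
  rw [zv, scaleJ_alg]
  split_ifs with h
  · simp only [scaleAux, AlgHom.toRingHom_eq_coe, RingHom.coe_coe, aeval_X, h, if_true, map_mul,
      toRF_X, toRF_C]
  · simp only [scaleAux, AlgHom.toRingHom_eq_coe, RingHom.coe_coe, aeval_X, h, if_false, toRF_C]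

lemma scaleJ_const {l : ℕ} (J : Finset (Fin l)) (c : k) :
    scaleJ J (algebraMap k (RF k l) c) = RatFunc.C (algebraMap k (RF k l) c) := by
  rw [IsScalarTower.algebraMap_apply k (MvPolynomial (Fin l) k) (RF k l), scaleJ_alg, ← toRF_C]
  simp [scaleAux]

lemma scaleAux_coeff {l : ℕ} (Q : MvPolynomial (Fin l) k) (m : ℕ) :
    (scaleAux k l Finset.univ Q).coeff m = homogeneousComponent m Q := by
  induction Q using MvPolynomial.induction_on' with
  | monomial u c =>
    rw [homogeneousComponent_of_mem (isHomogeneous_monomial c rfl)]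
    have hdeg : u.degree = ∑ i ∈ u.support, u i := rfl
    have : scaleAux k l Finset.univ (monomial u c) =
        Polynomial.C (monomial u c) * Polynomial.X ^ u.degree := by
      simp only [scaleAux, Finset.mem_univ, if_true, AlgHom.toRingHom_eq_coe, RingHom.coe_coe,
        aeval_monomial]
      rw [monomial_eq]
      simp only [Finsupp.prod, mul_pow, Finset.prod_mul_distrib, Finset.prod_pow_eq_pow_sum]
      simp only [map_mul, map_prod, map_pow, hdeg]
      rw [IsScalarTower.algebraMap_apply k (MvPolynomial (Fin l) k)]
      simp only [Polynomial.algebraMap_eq, MvPolynomial.algebraMap_eq]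
      ring
    rw [this, Polynomial.coeff_C_mul_X_pow]
  | add p q hp hq => rw [map_add, Polynomial.coeff_add, hp, hq, map_add]

lemma homog_of {l : ℕ} {Q : MvPolynomial (Fin l) k} {d : ℕ}
    (h : scaleJ Finset.univ (algebraMap _ (RF k l) Q) =
      RatFunc.X ^ d * RatFunc.C (algebraMap _ (RF k l) Q)) : Q.IsHomogeneous d := by
  have h2 : scaleAux k l Finset.univ Q = Polynomial.X ^ d * Polynomial.C Q := by
    apply toRatFuncHom_injective
    rw [← scaleJ_alg, h, map_mul, map_pow, toRF_X, toRF_C]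
  have h3 := scaleAux_coeff Q d
  rw [h2, mul_comm, Polynomial.coeff_C_mul_X_pow, if_pos rfl] at h3
  rw [h3]
  exact homogeneousComponent_isHomogeneous _ _

lemma D_alg {l : ℕ} {D : Fin l → Derivation k (RF k l) (RF k l)} (hD : IsPartialDeriv D)
    (i : Fin l) (p : MvPolynomial (Fin l) k) :
    D i (algebraMap _ (RF k l) p) = algebraMap _ (RF k l) (pderiv i p) := by
  induction p using MvPolynomial.induction_on with
  | C a =>
    rw [pderiv_C, map_zero, ← MvPolynomial.algebraMap_eq,
      ← IsScalarTower.algebraMap_apply k (MvPolynomial (Fin l) k) (RF k l), Derivation.map_algebraMap]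
  | add p q hp hq => simp only [map_add, hp, hq]
  | mul_X p j hp =>
    have := hD i j
    rw [zv] at this
    rw [map_mul, Derivation.leibniz, hp, this, Derivation.leibniz, pderiv_X, map_add]
    simp only [smul_eq_mul, map_mul, Pi.single_apply]
    congr 2
    split_ifs <;> simp_all

def LL {l : ℕ} (D : Fin l → Derivation k (RF k l) (RF k l)) (x : RF k l) : RF k l :=
  ∑ i, zv i ^ 2 * D i x

lemma LL_mul {l : ℕ} (D : Fin l → Derivation k (RF k l) (RF k l)) (x y : RF k l) :
    LL D (x * y) = x * LL D y + y * LL D x := by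
  simp only [LL, Finset.mul_sum, ← Finset.sum_add_distrib]
  apply Finset.sum_congr rfl
  intro i _
  rw [Derivation.leibniz]
  simp only [smul_eq_mul]; ring

lemma LL_alg {l : ℕ} {D : Fin l → Derivation k (RF k l) (RF k l)} (hD : IsPartialDeriv D)
    (p : MvPolynomial (Fin l) k) :
    LL D (algebraMap _ (RF k l) p) = algebraMap _ (RF k l) (opL k l p) := by
  simp [LL, opL_eq, D_alg hD, zv]

lemma LL_adm {l : ℕ} {D : Fin l → Derivation k (RF k l) (RF k l)} (α : RF k l) :
    (∑ i ∈ Finset.univ, ((zv i) ^ 2 * D i α + 4 * zv i * α)) =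
      LL D α + 4 * algebraMap _ (RF k l) (∑ i, X i : MvPolynomial (Fin l) k) * α := by
  rw [Finset.sum_add_distrib, LL, ← Finset.sum_mul, ← Finset.mul_sum, map_sum]; rfl

lemma der_pow {l : ℕ} (δ : Derivation k (MvPolynomial (Fin l) k) (MvPolynomial (Fin l) k))
    {V c : MvPolynomial (Fin l) k} (h : δ V = c * V) (n : ℕ) : δ (V ^ n) = n * c * V ^ n := by
  induction n with
  | zero => simp
  | succ n ih =>
    rw [pow_succ, Derivation.leibniz, ih, h]; simp only [smul_eq_mul]; push_cast; ring

theorem core [CharZero k] {l : ℕ} {D : Fin l → Derivation k (RF k l) (RF k l)}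
    (hD : IsPartialDeriv D) {V : MvPolynomial (Fin l) k} {a b s : ℕ} (hs : s * a = 4)
    (hb : s * b = 2 * l) (hal : a * l = 2 * b) (hV : V ≠ 0)
    (hL : opL k l V = ((a : MvPolynomial (Fin l) k) * ∑ i, X i) * V)
    (hS : scaleJ Finset.univ (algebraMap _ (RF k l) V) =
      RatFunc.X ^ b * RatFunc.C (algebraMap _ (RF k l) V))
    (hF : opF k l V = 0)
    (vand : ∀ w : Fin l → MvPolynomial (Fin l) k, ∑ i, w i = 0 → ∑ i, X i * w i = 0 →
      ∑ i, X i ^ 2 * w i = 0 → ∀ i, w i = 0)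
    {α : RF k l} {N : ℕ} {Q : MvPolynomial (Fin l) k}
    (hQ : α * algebraMap _ (RF k l) V ^ (N + s) = algebraMap _ (RF k l) Q)
    (hα : Admissible D Finset.univ α) :
    ∃ c : k, α = c • (algebraMap _ (RF k l) V ^ s)⁻¹ := by
  obtain ⟨-, -, hreg, hhom, -⟩ := hα
  have hV' : algebraMap _ (RF k l) V ≠ 0 := by
    rw [Ne, FaithfulSMul.algebraMap_eq_zero_iff]; exact hV
  have hVh : V.IsHomogeneous b := homog_of hS
  have hQh : Q.IsHomogeneous (b * N) := by
    apply homog_of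
    rw [IsHomogeneousOn] at hhom
    rw [← hQ, map_mul, hhom, map_pow, hS, map_mul, map_pow]
    have : (RatFunc.X : RatFunc (RF k l)) ^ (-(2 * ((Finset.univ : Finset (Fin l)).card : ℤ))) *
        (RatFunc.X ^ b) ^ (N + s) = RatFunc.X ^ (b * N) := by
      rw [← pow_mul, ← zpow_natCast, ← zpow_natCast, ← zpow_add₀ RatFunc.X_ne_zero]
      congr 1
      have : (s : ℤ) * b = 2 * l := by exact_mod_cast hb
      simp only [Finset.card_univ, Fintype.card_fin]
      push_cast
      linear_combination this
    rw [mul_pow]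
    linear_combination (RatFunc.C α * RatFunc.C (algebraMap _ (RF k l) V) ^ (N + s)) * this
  have hQL : opL k l Q = (((a * N : ℕ) : MvPolynomial (Fin l) k) * ∑ i, X i) * Q := by
    apply IsFractionRing.injective (MvPolynomial (Fin l) k) (RF k l)
    rw [LL_adm] at hreg
    rw [← LL_alg hD, ← hQ, LL_mul, ← map_pow, LL_alg hD, der_pow _ hL, map_mul _ _ Q, ← hQ]
    have : (s : RF k l) * a = 4 := by exact_mod_cast hs
    simp only [map_mul, map_pow, map_natCast]
    simp only [Nat.cast_mul, Nat.cast_add]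
    linear_combination algebraMap _ (RF k l) V ^ (N + s) * hreg +
      α * algebraMap _ (RF k l) V ^ (N + s) * algebraMap _ (RF k l) (∑ i, X i : MvPolynomial (Fin l) k) * this
  have hQF : opF k l Q = 0 :=
    opF_zero hQh (by linear_combination N * hal) hQL
  have hVF : opF k l (V ^ N) = 0 := by
    rw [der_pow (c := 0) _ (by rw [hF, zero_mul])]; ring
  have hH1 : opH k l Q = (b * N : ℕ) • Q := by rw [opH_eq, hQh.sum_X_mul_pderiv]
  have hH2 : opH k l (V ^ N) = (b * N : ℕ) • V ^ N := by
    rw [opH_eq, (hVh.pow N).sum_X_mul_pderiv]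
  have hVL := der_pow _ hL N
  obtain ⟨c, hc⟩ := wronsk (P := Q) (pow_ne_zero N hV) (fun i => by
    rw [← sub_eq_zero]
    revert i
    apply vand
    · rw [opF_eq] at hQF hVF
      rw [Finset.sum_sub_distrib, ← Finset.mul_sum, ← Finset.mul_sum, hQF, hVF]; ring
    · rw [opH_eq] at hH1 hH2
      simp only [mul_sub, mul_left_comm (X _) _ _]
      rw [Finset.sum_sub_distrib, ← Finset.mul_sum, ← Finset.mul_sum, hH1, hH2]
      simp only [nsmul_eq_mul]; ring
    · rw [opL_eq] at hQL hVL
      simp only [mul_sub, mul_left_comm (X _ ^ 2) _ _]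
      rw [Finset.sum_sub_distrib, ← Finset.mul_sum, ← Finset.mul_sum, hQL, hVL]
      push_cast; ring)
  refine ⟨c, ?_⟩
  rw [hc, map_mul, map_pow, ← MvPolynomial.algebraMap_eq,
    ← IsScalarTower.algebraMap_apply k (MvPolynomial (Fin l) k) (RF k l)] at hQ
  rw [Algebra.smul_def]
  field_simp
  apply mul_right_cancel₀ (pow_ne_zero N hV')
  linear_combination hQ


def Reg {L : Type} [Field L] (m : ℤ) (f : RatFunc L) : Prop :=
  ∃ h g : Polynomial L, g.coeff 0 ≠ 0 ∧
    f = RatFunc.X ^ m * (algebraMap _ (RatFunc L) h / algebraMap _ (RatFunc L) g)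

lemma Reg.mul {L : Type} [Field L] {m m' : ℤ} {f f' : RatFunc L} (h : Reg m f) (h' : Reg m' f') :
    Reg (m + m') (f * f') := by
  obtain ⟨a, b, hb, rfl⟩ := h
  obtain ⟨c, d, hd, rfl⟩ := h'
  refine ⟨a * c, b * d, ?_, ?_⟩
  · rw [Polynomial.mul_coeff_zero]; exact mul_ne_zero hb hd
  · rw [zpow_add₀ RatFunc.X_ne_zero, map_mul, map_mul, mul_div_mul_comm]; ring

lemma Reg_C {L : Type} [Field L] (a : L) : Reg 0 (RatFunc.C a) :=
  ⟨Polynomial.C a, 1, by simp, by simp⟩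

lemma Reg_X {L : Type} [Field L] (m : ℤ) : Reg m (RatFunc.X ^ m : RatFunc L) :=
  ⟨1, 1, by simp, by simp⟩

lemma Reg_inv {L : Type} [Field L] (g : Polynomial L) (hg : g.coeff 0 ≠ 0) (s : ℕ) :
    Reg 0 ((algebraMap _ (RatFunc L) g) ^ (-(s : ℤ))) :=
  ⟨1, g ^ s, by
    rw [Polynomial.coeff_zero_eq_eval_zero] at *
    rw [Polynomial.eval_pow]; exact pow_ne_zero _ hg, by simp⟩

lemma Reg.lcoeff {L : Type} [Field L] {m : ℤ} {f : RatFunc L} (h : Reg m f) {j : ℤ} (hj : j < m) :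
    lcoeff j f = 0 := by
  obtain ⟨h, g, hg, rfl⟩ := h
  rw [Griess.lcoeff, map_mul, map_zpow₀, RatFunc.coe_X, ← RatFunc.single_zpow]
  have hg' : PowerSeries.constantCoeff (g : PowerSeries L) ≠ 0 := by
    simpa using hg
  have e : ((algebraMap _ (RatFunc L) h / algebraMap _ (RatFunc L) g : RatFunc L) :
      LaurentSeries L) =
      (((h : PowerSeries L) * (g : PowerSeries L)⁻¹ : PowerSeries L) : LaurentSeries L) := by
    have hgne : ((g : PowerSeries L) : LaurentSeries L) ≠ 0 := by
      intro h0
      have : (g : PowerSeries L) = 0 := by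
        apply HahnSeries.ofPowerSeries_injective (Γ := ℤ); rw [h0, map_zero]
      rw [this] at hg'; simp at hg'
    have h1 : ((algebraMap _ (RatFunc L) g : RatFunc L) : LaurentSeries L) =
      ((g : PowerSeries L) : LaurentSeries L) := (RatFunc.coe_coe g).symm
    have h2 : ((algebraMap _ (RatFunc L) h : RatFunc L) : LaurentSeries L) =
      ((h : PowerSeries L) : LaurentSeries L) := (RatFunc.coe_coe h).symm
    rw [map_div₀, h1, h2, div_eq_iff hgne, ← PowerSeries.coe_mul, mul_assoc,
      PowerSeries.inv_mul_cancel _ hg', mul_one]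
  rw [e]
  have := HahnSeries.coeff_single_mul_add (R := L) (r := 1) (x := (((h : PowerSeries L) *
    (g : PowerSeries L)⁻¹ : PowerSeries L) : LaurentSeries L)) (a := j - m) (b := m)
  rw [sub_add_cancel] at this
  rw [this, PowerSeries.coeff_coe, if_pos (by omega), mul_zero]

lemma lcoeff_XC {L : Type} [Field L] {m j : ℤ} (a : L) (hj : j ≠ m) :
    lcoeff j (RatFunc.X ^ m * RatFunc.C a) = 0 := by
  rw [lcoeff, map_mul, map_zpow₀, RatFunc.coe_X, ← RatFunc.single_zpow]
  have h2 : ((RatFunc.C a : RatFunc L) : LaurentSeries L) =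
      HahnSeries.single 0 a := by
    rw [← RatFunc.algebraMap_C]
    have := RatFunc.coe_coe (Polynomial.C a)
    rw [Polynomial.coe_C, PowerSeries.coe_C] at this
    exact this.symm
  rw [h2, HahnSeries.single_mul_single, HahnSeries.coeff_single_of_ne]
  simpa using hj

lemma zv_inj {l : ℕ} {i j : Fin l} (h : i ≠ j) : (zv i - zv j : RF k l) ≠ 0 := by
  rw [sub_ne_zero]
  intro h2
  exact h (X_injective (IsFractionRing.injective _ (RF k l) h2))

lemma zv_ne {l : ℕ} (i : Fin l) : (zv i : RF k l) ≠ 0 := by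
  intro h2
  apply X_ne_zero (R := k) i
  apply IsFractionRing.injective _ (RF k l)
  rw [map_zero]; exact h2

lemma pairReg {l : ℕ} (J : Finset (Fin l)) (i j : Fin l) (s : ℕ) :
    Reg (if i ∈ J ∧ j ∈ J then -(s : ℤ) else 0)
      (scaleJ J ((zv i - zv j : RF k l) ^ (-(s : ℤ)))) := by
  rw [map_zpow₀, map_sub, scaleJ_zv, scaleJ_zv]
  by_cases hi : i ∈ J <;> by_cases hj : j ∈ J <;> simp only [hi, hj, if_true, if_false, and_self,
    and_true, and_false]
  · rw [← mul_sub, mul_zpow, ← map_sub, ← map_zpow₀]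
    have := (Reg_X (L := RF k l) (-(s : ℤ))).mul (Reg_C ((zv i - zv j : RF k l) ^ (-(s : ℤ))))
    rwa [add_zero] at this
  · have := Reg_inv (Polynomial.X * Polynomial.C (zv i : RF k l) - Polynomial.C (zv j))
      (by simpa using zv_ne j) s
    simpa only [map_sub, map_mul, RatFunc.algebraMap_X, RatFunc.algebraMap_C] using this
  · have := Reg_inv (Polynomial.C (zv i : RF k l) - Polynomial.X * Polynomial.C (zv j))
      (by simpa using zv_ne i) s
    simpa only [map_sub, map_mul, RatFunc.algebraMap_X, RatFunc.algebraMap_C] using this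
  · rw [← map_sub, ← map_zpow₀]
    exact Reg_C _

lemma scale_univ {l : ℕ} (i j : Fin l) (m : ℤ) :
    scaleJ Finset.univ ((zv i - zv j : RF k l) ^ m) =
      RatFunc.X ^ m * RatFunc.C ((zv i - zv j : RF k l) ^ m) := by
  rw [map_zpow₀, map_sub, scaleJ_zv, scaleJ_zv]
  simp [← mul_sub, mul_zpow]

lemma scale_empty {l : ℕ} (i j : Fin l) (m : ℤ) :
    scaleJ ∅ ((zv i - zv j : RF k l) ^ m) = RatFunc.C ((zv i - zv j : RF k l) ^ m) := by
  rw [map_zpow₀, map_sub, scaleJ_zv, scaleJ_zv]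
  simp

lemma dep_univ {l : ℕ} {α : RF k l} (h : α ∈ Phi k l) : dependsOnlyOn Finset.univ α := by
  have hz : ∀ i, (zv i : RF k l) ∈ Subfield.closure
      (Set.range (algebraMap k (RF k l)) ∪ {x | ∃ i ∈ Finset.univ, x = zv i}) := fun i =>
    Subfield.subset_closure (Or.inr ⟨i, Finset.mem_univ _, rfl⟩)
  obtain ⟨p, e, rfl⟩ := h
  unfold dependsOnlyOn
  apply mul_mem
  · induction p using MvPolynomial.induction_on with
    | C a =>
      apply Subfield.subset_closure
      left
      exact ⟨a, by rw [← MvPolynomial.algebraMap_eq, ← IsScalarTower.algebraMap_apply]⟩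
    | add p q hp hq => rw [map_add]; exact add_mem hp hq
    | mul_X p j hp => rw [map_mul]; exact mul_mem hp (hz j)
  · apply prod_mem; intro i _
    apply prod_mem; intro j _
    split_ifs
    · exact zpow_mem (sub_mem (hz i) (hz j)) _
    · exact one_mem _

lemma LL_const {l : ℕ} {D : Fin l → Derivation k (RF k l) (RF k l)} (c : k) :
    LL D (algebraMap k (RF k l) c) = 0 := by
  simp [LL]

lemma reg_of {l : ℕ} {D : Fin l → Derivation k (RF k l) (RF k l)}
    (hD : IsPartialDeriv D) {V : MvPolynomial (Fin l) k} {a s : ℕ} (hs : s * a = 4) (hV : V ≠ 0)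
    (hL : opL k l V = ((a : MvPolynomial (Fin l) k) * ∑ i, X i) * V) (c : k) {α : RF k l}
    (h : α = c • (algebraMap _ (RF k l) V ^ s)⁻¹) :
    (∑ i ∈ Finset.univ, ((zv i) ^ 2 * D i α + 4 * zv i * α)) = 0 := by
  have hV' : algebraMap _ (RF k l) V ≠ 0 := by
    rw [Ne, FaithfulSMul.algebraMap_eq_zero_iff]; exact hV
  rw [LL_adm]
  have h1 : α * algebraMap _ (RF k l) (V ^ s) = algebraMap k (RF k l) c := by
    rw [h, Algebra.smul_def, map_pow]; field_simp
  have h2 := LL_const (D := D) c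
  rw [← h1, LL_mul, LL_alg hD, der_pow _ hL] at h2
  have : (s : RF k l) * a = 4 := by
    rw [← Nat.cast_mul, hs]; norm_num
  simp only [map_mul, map_pow, map_natCast] at h2
  apply mul_right_cancel₀ (pow_ne_zero s hV')
  linear_combination h2 - α * algebraMap _ (RF k l) V ^ s *
    algebraMap _ (RF k l) (∑ i, X i : MvPolynomial (Fin l) k) * this


lemma span_eq {l : ℕ} {S : Set (RF k l)} {v : RF k l} (h1 : ∀ α ∈ S, ∃ c : k, α = c • v)
    (h2 : ∀ c : k, c • v ∈ S) : S = (Submodule.span k {v} : Set (RF k l)) := by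
  ext α
  rw [SetLike.mem_coe, Submodule.mem_span_singleton]
  constructor
  · intro h; obtain ⟨c, hc⟩ := h1 α h; exact ⟨c, hc.symm⟩
  · rintro ⟨c, rfl⟩; exact h2 c

def V2 (k : Type) [Field k] : MvPolynomial (Fin 2) k := X 0 - X 1
def V3 (k : Type) [Field k] : MvPolynomial (Fin 3) k := (X 0 - X 1) * (X 0 - X 2) * (X 1 - X 2)

lemma alg_sub {l : ℕ} (i j : Fin l) :
    algebraMap _ (RF k l) (X i - X j : MvPolynomial (Fin l) k) = zv i - zv j := by
  rw [map_sub]; rfl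

lemma alg_V2 : algebraMap _ (RF k 2) (V2 k) = zv 0 - zv 1 := alg_sub _ _

lemma alg_V3 : algebraMap _ (RF k 3) (V3 k) = (zv 0 - zv 1) * (zv 0 - zv 2) * (zv 1 - zv 2) := by
  rw [V3, map_mul, map_mul, alg_sub, alg_sub, alg_sub]

lemma X_sub_ne {l : ℕ} {i j : Fin l} (h : i ≠ j) : (X i - X j : MvPolynomial (Fin l) k) ≠ 0 :=
  sub_ne_zero.2 fun h2 => h (X_injective h2)

lemma V2_ne : V2 k ≠ 0 := X_sub_ne (by decide)
lemma V3_ne : V3 k ≠ 0 :=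
  mul_ne_zero (mul_ne_zero (X_sub_ne (by decide)) (X_sub_ne (by decide))) (X_sub_ne (by decide))

lemma opL_X {l : ℕ} (i : Fin l) : opL k l (X i) = X i ^ 2 := by simp [opL, mkDerivation_X]

lemma V2_L : opL k 2 (V2 k) = (((1 : ℕ) : MvPolynomial (Fin 2) k) * ∑ i, X i) * V2 k := by
  rw [V2, map_sub, opL_X, opL_X, Fin.sum_univ_two]; push_cast; ring

lemma V3_L : opL k 3 (V3 k) = (((2 : ℕ) : MvPolynomial (Fin 3) k) * ∑ i, X i) * V3 k := by
  rw [V3, Fin.sum_univ_three]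
  simp only [Derivation.leibniz, map_sub, opL_X, smul_eq_mul]; push_cast; ring

lemma V2_F : opF k 2 (V2 k) = 0 := by
  rw [V2, map_sub, opF_X, opF_X]; ring

lemma V3_F : opF k 3 (V3 k) = 0 := by
  rw [V3]
  simp only [Derivation.leibniz, map_sub, opF_X, smul_eq_mul]; ring

lemma V2_S : scaleJ Finset.univ (algebraMap _ (RF k 2) (V2 k)) =
      RatFunc.X ^ 1 * RatFunc.C (algebraMap _ (RF k 2) (V2 k)) := by
  have := scale_univ (k := k) (l := 2) 0 1 1
  simp only [zpow_one] at this
  rw [alg_V2, this]; ring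

lemma V3_S : scaleJ Finset.univ (algebraMap _ (RF k 3) (V3 k)) =
      RatFunc.X ^ 3 * RatFunc.C (algebraMap _ (RF k 3) (V3 k)) := by
  have h1 := scale_univ (k := k) (l := 3) 0 1 1
  have h2 := scale_univ (k := k) (l := 3) 0 2 1
  have h3 := scale_univ (k := k) (l := 3) 1 2 1
  simp only [zpow_one] at h1 h2 h3
  rw [alg_V3, map_mul, map_mul, h1, h2, h3, map_mul, map_mul]; ring

lemma V2_vand (w : Fin 2 → MvPolynomial (Fin 2) k) (h0 : ∑ i, w i = 0) (h1 : ∑ i, X i * w i = 0)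
    (_ : ∑ i, X i ^ 2 * w i = 0) : ∀ i, w i = 0 := by
  rw [Fin.sum_univ_two] at h0 h1
  have h01 : (X 0 - X 1 : MvPolynomial (Fin 2) k) ≠ 0 := X_sub_ne (by decide)
  rw [Fin.forall_fin_two]
  constructor
  · apply mul_left_cancel₀ h01; linear_combination h1 - X 1 * h0
  · apply mul_left_cancel₀ h01; linear_combination -h1 + X 0 * h0

lemma V3_vand (w : Fin 3 → MvPolynomial (Fin 3) k) (h0 : ∑ i, w i = 0) (h1 : ∑ i, X i * w i = 0)
    (h2 : ∑ i, X i ^ 2 * w i = 0) : ∀ i, w i = 0 := by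
  rw [Fin.sum_univ_three] at h0 h1 h2
  have h01 : (X 0 - X 1 : MvPolynomial (Fin 3) k) ≠ 0 := X_sub_ne (by decide)
  have h02 : (X 0 - X 2 : MvPolynomial (Fin 3) k) ≠ 0 := X_sub_ne (by decide)
  have h12 : (X 1 - X 2 : MvPolynomial (Fin 3) k) ≠ 0 := X_sub_ne (by decide)
  have g0 : w 0 = 0 := by
    apply mul_left_cancel₀ (mul_ne_zero h01 h02)
    linear_combination h2 - (X 1 + X 2) * h1 + X 1 * X 2 * h0
  have g1 : w 1 = 0 := by
    apply mul_left_cancel₀ (mul_ne_zero h01 h12)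
    linear_combination -h2 + (X 0 + X 2) * h1 - X 0 * X 2 * h0
  have g2 : w 2 = 0 := by
    apply mul_left_cancel₀ (mul_ne_zero h02 h12)
    linear_combination h2 - (X 0 + X 1) * h1 + X 0 * X 1 * h0
  intro i
  fin_cases i
  exacts [g0, g1, g2]

lemma alg_toNat {l : ℕ} {i j : Fin l} {n : ℤ} (hn : 0 ≤ n) :
    algebraMap _ (RF k l) ((X i - X j : MvPolynomial (Fin l) k) ^ n.toNat) = (zv i - zv j) ^ n := by
  rw [map_pow, alg_sub, ← zpow_natCast, Int.toNat_of_nonneg hn]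

lemma case1 {D : Fin 1 → Derivation k (RF k 1) (RF k 1)} :
    {α : RF k 1 | Admissible D Finset.univ α} = {0} := by
  ext α
  simp only [Set.mem_setOf_eq, Set.mem_singleton_iff]
  constructor
  · rintro ⟨⟨p, e, rfl⟩, -, -, hhom, -⟩
    simp only [Finset.univ_unique, Finset.prod_singleton, lt_self_iff_false, if_false, mul_one]
      at hhom ⊢
    rw [IsHomogeneousOn, scaleJ_alg] at hhom
    have h : Polynomial.X ^ 2 * scaleAux k 1 {default} p = Polynomial.C p := by
      apply toRatFuncHom_injective
      rw [map_mul, hhom, toRF_C, map_pow, toRF_X, ← mul_assoc, ← zpow_natCast,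
        ← zpow_add₀ RatFunc.X_ne_zero]
      simp
    have h2 := congrArg (fun q => Polynomial.coeff q 0) h
    simp [Polynomial.mul_coeff_zero] at h2
    rw [← h2, map_zero]
  · rintro rfl
    have hp : (0 : RF k 1) ∈ Phi k 1 := ⟨0, 0, by simp⟩
    refine ⟨hp, dep_univ hp, by simp, by simp [IsHomogeneousOn], ?_⟩
    intro J _ n _
    simp [component, lcoeff]

lemma case2a [CharZero k] {D : Fin 2 → Derivation k (RF k 2) (RF k 2)} (hD : IsPartialDeriv D)
    (α : RF k 2) (h : Admissible D Finset.univ α) :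
    ∃ c : k, α = c • ((zv 0 - zv 1 : RF k 2) ^ (-4 : ℤ)) := by
  obtain ⟨p, e, he⟩ := h.1
  have hz : (zv 0 - zv 1 : RF k 2) ≠ 0 := zv_inj (by decide)
  have he' : α = algebraMap _ (RF k 2) p * (zv 0 - zv 1) ^ e 0 1 := by
    rw [he]; simp [Fin.prod_univ_two]
  obtain ⟨c, hc⟩ := core hD (V := V2 k) (a := 1) (b := 1) (s := 4) (by norm_num) (by norm_num)
    (by norm_num) V2_ne V2_L V2_S V2_F V2_vand (α := α) (N := (e 0 1).natAbs)
    (Q := p * (X 0 - X 1) ^ (e 0 1 + (((e 0 1).natAbs + 4 : ℕ) : ℤ)).toNat) (by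
      rw [map_mul, alg_toNat (by omega), alg_V2, he', zpow_add₀ hz, zpow_natCast]; ring) h
  refine ⟨c, ?_⟩
  rw [hc, alg_V2]
  rfl

lemma case3a [CharZero k] {D : Fin 3 → Derivation k (RF k 3) (RF k 3)} (hD : IsPartialDeriv D)
    (α : RF k 3) (h : Admissible D Finset.univ α) :
    ∃ c : k, α = c • ((zv 0 - zv 1) ^ (-2 : ℤ) * (zv 0 - zv 2) ^ (-2 : ℤ)
            * (zv 1 - zv 2) ^ (-2 : ℤ) : RF k 3) := by
  obtain ⟨p, e, he⟩ := h.1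
  have hz : (zv 0 - zv 1 : RF k 3) ≠ 0 := zv_inj (by decide)
  have hz2 : (zv 0 - zv 2 : RF k 3) ≠ 0 := zv_inj (by decide)
  have hz3 : (zv 1 - zv 2 : RF k 3) ≠ 0 := zv_inj (by decide)
  have he' : α = algebraMap _ (RF k 3) p * ((zv 0 - zv 1) ^ e 0 1 * (zv 0 - zv 2) ^ e 0 2 *
      (zv 1 - zv 2) ^ e 1 2) := by
    rw [he]; simp [Fin.prod_univ_three]
  obtain ⟨N, hN⟩ : ∃ N : ℕ, N = (e 0 1).natAbs + (e 0 2).natAbs + (e 1 2).natAbs := ⟨_, rfl⟩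
  obtain ⟨c, hc⟩ := core hD (V := V3 k) (a := 2) (b := 3) (s := 2) (by norm_num) (by norm_num)
    (by norm_num) V3_ne V3_L V3_S V3_F V3_vand (α := α) (N := N)
    (Q := p * ((X 0 - X 1) ^ (e 0 1 + ((N + 2 : ℕ) : ℤ)).toNat *
      (X 0 - X 2) ^ (e 0 2 + ((N + 2 : ℕ) : ℤ)).toNat *
      (X 1 - X 2) ^ (e 1 2 + ((N + 2 : ℕ) : ℤ)).toNat)) (by
      rw [map_mul, map_mul, map_mul, alg_toNat (by omega), alg_toNat (by omega),
        alg_toNat (by omega), alg_V3, he', zpow_add₀ hz, zpow_add₀ hz2, zpow_add₀ hz3,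
        zpow_natCast, zpow_natCast, zpow_natCast, mul_pow, mul_pow]; ring) h
  refine ⟨c, ?_⟩
  rw [hc, alg_V3, mul_pow, mul_pow, mul_inv, mul_inv]
  rfl

lemma case2b {D : Fin 2 → Derivation k (RF k 2) (RF k 2)} (hD : IsPartialDeriv D)
    (c : k) : Admissible D Finset.univ (c • ((zv 0 - zv 1 : RF k 2) ^ (-4 : ℤ))) := by
  have hp : c • ((zv 0 - zv 1 : RF k 2) ^ (-4 : ℤ)) ∈ Phi k 2 := by
    refine ⟨C c, fun _ _ => -4, ?_⟩
    rw [Algebra.smul_def, ← MvPolynomial.algebraMap_eq, ← IsScalarTower.algebraMap_apply]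
    simp [Fin.prod_univ_two]
  have hh : scaleJ Finset.univ (c • ((zv 0 - zv 1 : RF k 2) ^ (-4 : ℤ))) =
      RatFunc.X ^ (-4 : ℤ) * RatFunc.C (c • ((zv 0 - zv 1 : RF k 2) ^ (-4 : ℤ))) := by
    rw [Algebra.smul_def, map_mul, scaleJ_const, scale_univ, map_mul]; ring
  have he : scaleJ ∅ (c • ((zv 0 - zv 1 : RF k 2) ^ (-4 : ℤ))) =
      RatFunc.X ^ (0 : ℤ) * RatFunc.C (c • ((zv 0 - zv 1 : RF k 2) ^ (-4 : ℤ))) := by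
    rw [Algebra.smul_def, map_mul, scaleJ_const, scale_empty, map_mul, zpow_zero, one_mul]
  refine ⟨hp, dep_univ hp, reg_of hD (V := V2 k) (a := 1) (s := 4) (by norm_num) V2_ne V2_L c
    (by rw [alg_V2]; rfl), ?_, ?_⟩
  · rw [IsHomogeneousOn, hh]; simp
  · intro J _ n hn
    rw [component]
    by_cases h0 : J = ∅
    · subst h0
      rw [he]; apply lcoeff_XC; simp; omega
    by_cases h1 : J = Finset.univ
    · subst h1
      rw [hh]; apply lcoeff_XC; simp; omega
    rw [Algebra.smul_def, map_mul, scaleJ_const]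
    apply ((Reg_C _).mul (pairReg J 0 1 4)).lcoeff
    have : ¬ ((0 : Fin 2) ∈ J ∧ (1 : Fin 2) ∈ J) := by
      intro h; apply h1; ext i; fin_cases i <;> simp [h]
    have hc : 1 ≤ J.card := Finset.card_pos.2 (Finset.nonempty_iff_ne_empty.2 h0)
    simp [this]; omega

lemma case3c {J : Finset (Fin 3)} (h0 : J ≠ ∅) (h1 : J ≠ Finset.univ) {n : ℤ} (hn : n < 2) (c : k) :
    component J (fun _ => 2) n (c • ((zv 0 - zv 1) ^ (-2 : ℤ) * (zv 0 - zv 2) ^ (-2 : ℤ)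
            * (zv 1 - zv 2) ^ (-2 : ℤ) : RF k 3)) = 0 := by
  rw [component, Algebra.smul_def, map_mul, scaleJ_const, map_mul, map_mul]
  apply ((Reg_C _).mul (((pairReg J 0 1 2).mul (pairReg J 0 2 2)).mul (pairReg J 1 2 2))).lcoeff
  have key : ∀ J : Finset (Fin 3), J ≠ ∅ → J ≠ Finset.univ →
     2 - (∑ j ∈ J, (2 : ℤ)) ≤ 0 + ((if 0 ∈ J ∧ 1 ∈ J then -((2 : ℕ) : ℤ) else 0) +
       (if 0 ∈ J ∧ 2 ∈ J then -((2 : ℕ) : ℤ) else 0) +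
       (if 1 ∈ J ∧ 2 ∈ J then -((2 : ℕ) : ℤ) else 0)) := by
    clear hn h0 h1
    intro J h0 h1
    have hs : ∑ j ∈ J, (2 : ℤ) = ∑ j : Fin 3, if j ∈ J then (2 : ℤ) else 0 := by
      rw [Finset.sum_ite_mem]; simp
    rw [hs, Fin.sum_univ_three]
    by_cases a0 : (0 : Fin 3) ∈ J <;> by_cases a1 : (1 : Fin 3) ∈ J <;>
      by_cases a2 : (2 : Fin 3) ∈ J <;> simp [a0, a1, a2]
    · exact h1 (by ext i; fin_cases i <;> simp [a0, a1, a2])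
    · exact h0 (by ext i; fin_cases i <;> simp [a0, a1, a2])
  have := key J h0 h1
  convert lt_of_lt_of_le (sub_lt_sub_right hn _) this using 1

lemma case3b {D : Fin 3 → Derivation k (RF k 3) (RF k 3)} (hD : IsPartialDeriv D)
    (c : k) : Admissible D Finset.univ (c • ((zv 0 - zv 1) ^ (-2 : ℤ) * (zv 0 - zv 2) ^ (-2 : ℤ)
            * (zv 1 - zv 2) ^ (-2 : ℤ) : RF k 3)) := by
  set v := ((zv 0 - zv 1) ^ (-2 : ℤ) * (zv 0 - zv 2) ^ (-2 : ℤ)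
            * (zv 1 - zv 2) ^ (-2 : ℤ) : RF k 3) with hv
  have hp : c • v ∈ Phi k 3 := by
    refine ⟨C c, fun _ _ => -2, ?_⟩
    rw [Algebra.smul_def, ← MvPolynomial.algebraMap_eq, ← IsScalarTower.algebraMap_apply, hv]
    simp [Fin.prod_univ_three]
  have hh : scaleJ Finset.univ (c • v) = RatFunc.X ^ (-6 : ℤ) * RatFunc.C (c • v) := by
    have : (RatFunc.X : RatFunc (RF k 3)) ^ (-6 : ℤ) =
        RatFunc.X ^ (-2 : ℤ) * RatFunc.X ^ (-2 : ℤ) * RatFunc.X ^ (-2 : ℤ) := by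
      rw [← zpow_add₀ RatFunc.X_ne_zero, ← zpow_add₀ RatFunc.X_ne_zero]; norm_num
    rw [this, Algebra.smul_def, map_mul, scaleJ_const, hv, map_mul, map_mul, scale_univ, scale_univ,
      scale_univ, map_mul, map_mul, map_mul]; ring
  have he : scaleJ ∅ (c • v) = RatFunc.X ^ (0 : ℤ) * RatFunc.C (c • v) := by
    rw [Algebra.smul_def, map_mul, scaleJ_const, hv, map_mul, map_mul, scale_empty, scale_empty,
      scale_empty, map_mul, map_mul, map_mul, zpow_zero, one_mul]
  refine ⟨hp, dep_univ hp, reg_of hD (V := V3 k) (a := 2) (s := 2) (by norm_num) V3_ne V3_L c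
    (by rw [alg_V3, mul_pow, mul_pow, mul_inv, mul_inv]; rfl), ?_, ?_⟩
  · rw [IsHomogeneousOn, hh]; simp
  · intro J _ n hn
    by_cases h0 : J = ∅
    · subst h0
      rw [component, he]; apply lcoeff_XC; simp; omega
    by_cases h1 : J = Finset.univ
    · subst h1
      rw [component, hh]; apply lcoeff_XC; simp; omega
    exact case3c h0 h1 (by omega) c

end Helpers

/-- `R¹ = 0`, `R² = k·(z₁-z₂)^{-4}`, and
`R³ = R³₀ = k·(z₁-z₂)^{-2}(z₁-z₃)^{-2}(z₂-z₃)^{-2}`. -/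
theorem statement6 {k : Type} [Field k] [CharZero k]
    (D1 : Fin 1 → Derivation k (RF k 1) (RF k 1)) (h1 : IsPartialDeriv D1)
    (D2 : Fin 2 → Derivation k (RF k 2) (RF k 2)) (h2 : IsPartialDeriv D2)
    (D3 : Fin 3 → Derivation k (RF k 3) (RF k 3)) (h3 : IsPartialDeriv D3) :
    {α : RF k 1 | Admissible D1 Finset.univ α} = {0} ∧
    {α : RF k 2 | Admissible D2 Finset.univ α} =
      (Submodule.span k {((zv 0 - zv 1 : RF k 2) ^ (-4 : ℤ))} : Set (RF k 2)) ∧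
    {α : RF k 3 | Admissible D3 Finset.univ α} =
      (Submodule.span k
        {((zv 0 - zv 1) ^ (-2 : ℤ) * (zv 0 - zv 2) ^ (-2 : ℤ)
            * (zv 1 - zv 2) ^ (-2 : ℤ) : RF k 3)} : Set (RF k 3)) ∧
    {α : RF k 3 | AdmissibleInd D3 Finset.univ α} =
      (Submodule.span k
        {((zv 0 - zv 1) ^ (-2 : ℤ) * (zv 0 - zv 2) ^ (-2 : ℤ)
            * (zv 1 - zv 2) ^ (-2 : ℤ) : RF k 3)} : Set (RF k 3)) := by
  refine ⟨case1, span_eq (case2a h2) (case2b h2), span_eq (case3a h3) (case3b h3),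
    span_eq (fun α h => case3a h3 α h.1) fun c => ⟨case3b h3 c, ?_⟩⟩
  intro J _ hJ0 hJ1
  exact case3c hJ0 hJ1 (by norm_num) c

end Griess
end
end
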